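/- arXiv:1006.1561 — 7 statements merged into one kernel-verified Lean document; each statement's English description precedes it below -/
import Mathlib

section
/- Let f : ℝ → ℝ be differentiable on an open interval I containing [0,∞), let 0 ≤ a < b, suppose f' is integrable on [a,b], and suppose |f'| is m-convex on [0,∞) for some fixed m ∈ (0,1]. Then |f((a+b)/2) - (1/(b-a))·∫_a^b f(u) du| ≤ ((b-a)/8)·min{ |f'(a)| + m·|f'(b/m)| , |f'(b)| + m·|f'(a/m)| }. -/
open MeasureTheory Set intervalIntegral

/-!
Fold the interval at its midpoint: for `h u = f u + f (a + b - u)`, integrating `(u - a) • h' u` by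
parts over the left half gives exactly `(b - a) • f ((a + b) / 2) - ∫ u in a..b, f u`. Hence only
the symmetric sum `‖f' u‖ + ‖f' (a + b - u)‖` has to be bounded. The points `u` and `a + b - u` have
complementary weights with respect to `a` and `b = m * (b / m)`, so adding their two `m`-convexity
inequalities cancels the weights.
-/

/-- Toader's `m`-convexity, the hypothesis on `‖f'‖` in the midpoint inequality. The classical
notion has `m ∈ (0, 1]` and `s = [0, ∞)`; since `g` is a total function, `s` is not required to
contain the points `t * x + m * (1 - t) * y`. -/
def MConvexOn (m : ℝ) (s : Set ℝ) (g : ℝ → ℝ) : Prop :=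
  ∀ x ∈ s, ∀ y ∈ s, ∀ t ∈ Icc (0 : ℝ) 1,
    g (t * x + m * (1 - t) * y) ≤ t * g x + m * (1 - t) * g y

namespace MConvexOn

variable {m a b u : ℝ} {s : Set ℝ} {g : ℝ → ℝ}

theorem add_reflect_le (hg : MConvexOn m s g) (hm : m ≠ 0) (ha : a ∈ s) (hb : b / m ∈ s)
    (hu : u ∈ segment ℝ a b) : g u + g (a + b - u) ≤ g a + m * g (b / m) := by
  obtain ⟨t, r, ht, hr, htr, rfl⟩ := hu
  obtain rfl : r = 1 - t := by linarith
  have le_at_point := hg a ha (b / m) hb t ⟨ht, by linarith⟩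
  have le_at_reflection := hg a ha (b / m) hb (1 - t) ⟨hr, by linarith⟩
  have point_eq : t * a + m * (1 - t) * (b / m) = t • a + (1 - t) • b := by
    simp only [smul_eq_mul]
    field_simp
  have reflection_eq :
      (1 - t) * a + m * (1 - (1 - t)) * (b / m) = a + b - (t • a + (1 - t) • b) := by
    simp only [smul_eq_mul]
    field_simp
    ring
  rw [point_eq] at le_at_point
  rw [reflection_eq] at le_at_reflection
  linarith

theorem add_reflect_le_min (hg : MConvexOn m s g) (hm : m ≠ 0) (ha : a ∈ s) (hb : b ∈ s)
    (ham : a / m ∈ s) (hbm : b / m ∈ s) (hu : u ∈ segment ℝ a b) :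
    g u + g (a + b - u) ≤ min (g a + m * g (b / m)) (g b + m * g (a / m)) := by
  refine le_min (hg.add_reflect_le hm ha hbm hu) ?_
  rw [add_comm a b]
  exact hg.add_reflect_le hm hb ham (segment_symm ℝ a b ▸ hu)

end MConvexOn

section Midpoint

variable {E : Type*} [NormedAddCommGroup E] {a b C : ℝ} {f f' : ℝ → E}

theorem uIcc_left_midpoint_subset (a b : ℝ) : uIcc a ((a + b) / 2) ⊆ uIcc a b := by
  refine uIcc_subset_uIcc left_mem_uIcc ?_
  rw [← segment_eq_uIcc]
  exact ⟨1 / 2, 1 / 2, by norm_num, by norm_num, by norm_num, by simp only [smul_eq_mul]; ring⟩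

theorem intervalIntegrable_reflect_left_half (hf : IntervalIntegrable f volume a b) :
    IntervalIntegrable (fun u ↦ f (a + b - u)) volume a ((a + b) / 2) := by
  have reflected := (hf.comp_sub_left (a + b)).symm
  rw [add_sub_cancel_left, add_sub_cancel_right] at reflected
  exact reflected.mono_set (uIcc_left_midpoint_subset a b)

variable [NormedSpace ℝ E]

theorem integral_add_reflect_left_half (hf : IntervalIntegrable f volume a b) :
    ∫ u in a..(a + b) / 2, (f u + f (a + b - u)) = ∫ u in a..b, f u := by
  have left_half := hf.mono_set (uIcc_left_midpoint_subset a b)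
  have right_half : IntervalIntegrable f volume ((a + b) / 2) b := left_half.symm.trans hf
  rw [integral_add left_half (intervalIntegrable_reflect_left_half hf), integral_comp_sub_left,
    add_sub_cancel_left, sub_half, integral_add_adjacent_intervals left_half right_half]

theorem integral_sub_smul_deriv_sub_reflect [CompleteSpace E] (hab : a ≤ b)
    (hf : ContinuousOn f (Icc a b)) (hderiv : ∀ u ∈ Ioo a b, HasDerivAt f (f' u) u)
    (hint : IntervalIntegrable f' volume a b) :
    ∫ u in a..(a + b) / 2, (u - a) • (f' u - f' (a + b - u)) =
      (b - a) • f ((a + b) / 2) - ∫ u in a..b, f u := by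
  have ha_mid : a ≤ (a + b) / 2 := by linarith
  have fold_continuousOn :
      ContinuousOn (fun u ↦ f u + f (a + b - u)) (uIcc a ((a + b) / 2)) := by
    rw [uIcc_of_le ha_mid]
    refine (hf.mono (Icc_subset_Icc_right (by linarith))).add (hf.comp (by fun_prop) ?_)
    exact fun u hu ↦ ⟨by linarith [hu.2], by linarith [hu.1]⟩
  have fold_hasDerivAt : ∀ u ∈ Ioo (min a ((a + b) / 2)) (max a ((a + b) / 2)),
      HasDerivAt (fun u ↦ f u + f (a + b - u)) (f' u - f' (a + b - u)) u := by
    rw [min_eq_left ha_mid, max_eq_right ha_mid]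
    intro u hu
    have deriv_at_point := hderiv u ⟨hu.1, by linarith [hu.1, hu.2]⟩
    have deriv_at_reflection :=
      hderiv (a + b - u) ⟨by linarith [hu.1, hu.2], by linarith [hu.1]⟩
    rw [sub_eq_add_neg]
    exact deriv_at_point.add (deriv_at_reflection.comp_const_sub _ _)
  have fold_deriv_integrable := (hint.mono_set (uIcc_left_midpoint_subset a b)).sub
    (intervalIntegrable_reflect_left_half hint)
  have f_integrable : IntervalIntegrable f volume a b :=
    ContinuousOn.intervalIntegrable (by rwa [uIcc_of_le hab])
  rw [integral_smul_deriv_eq_deriv_smul_of_hasDerivAt (u := fun u ↦ u - a) (u' := fun _ ↦ 1)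
    (by fun_prop) fold_continuousOn (fun u _ ↦ (hasDerivAt_id u).sub_const a) fold_hasDerivAt
    intervalIntegrable_const fold_deriv_integrable]
  simp only [one_smul, integral_add_reflect_left_half f_integrable, sub_self, zero_smul, sub_zero,
    sub_half, ← two_smul ℝ (f _), smul_smul]
  congr 2
  ring

theorem integral_sub_left_half (a b : ℝ) :
    ∫ u in a..(a + b) / 2, (u - a) = (b - a) ^ 2 / 8 := by
  rw [integral_comp_sub_right (fun u ↦ u), integral_id]
  ring

theorem norm_midpoint_sub_average_le_of_norm_deriv_add_reflect_le [CompleteSpace E] (hab : a < b)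
    (hf : ContinuousOn f (Icc a b)) (hderiv : ∀ u ∈ Ioo a b, HasDerivAt f (f' u) u)
    (hint : IntervalIntegrable f' volume a b)
    (hC : ∀ u ∈ Ioo a b, ‖f' u‖ + ‖f' (a + b - u)‖ ≤ C) :
    ‖f ((a + b) / 2) - (1 / (b - a)) • ∫ u in a..b, f u‖ ≤ (b - a) / 8 * C := by
  have hba : 0 < b - a := sub_pos.mpr hab
  have integrand_le : ∀ u ∈ Ioc a ((a + b) / 2),
      ‖(u - a) • (f' u - f' (a + b - u))‖ ≤ (u - a) * C := by
    intro u hu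
    rw [norm_smul, Real.norm_of_nonneg (sub_nonneg.mpr hu.1.le)]
    gcongr
    · linarith [hu.1]
    · exact (norm_sub_le _ _).trans (hC u ⟨hu.1, by linarith [hu.2]⟩)
  calc ‖f ((a + b) / 2) - (1 / (b - a)) • ∫ u in a..b, f u‖
      = 1 / (b - a) * ‖(b - a) • f ((a + b) / 2) - ∫ u in a..b, f u‖ := by
        rw [← norm_smul_of_nonneg (one_div_pos.mpr hba).le, smul_sub, smul_smul,
          one_div_mul_cancel hba.ne', one_smul]
    _ = 1 / (b - a) * ‖∫ u in a..(a + b) / 2, (u - a) • (f' u - f' (a + b - u))‖ := by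
        rw [integral_sub_smul_deriv_sub_reflect hab.le hf hderiv hint]
    _ ≤ 1 / (b - a) * ∫ u in a..(a + b) / 2, (u - a) * C := by
        gcongr
        exact norm_integral_le_of_norm_le (by linarith) (.of_forall integrand_le)
          (Continuous.intervalIntegrable (by fun_prop) _ _)
    _ = (b - a) / 8 * C := by
        rw [intervalIntegral.integral_mul_const, integral_sub_left_half]
        field_simp

theorem stmt_2_general [CompleteSpace E] (hab : a < b) (hf : ContinuousOn f (Icc a b))
    (hderiv : ∀ u ∈ Ioo a b, HasDerivAt f (f' u) u) (hint : IntervalIntegrable f' volume a b)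
    {m : ℝ} {s : Set ℝ} (hm : m ≠ 0) (hconv : MConvexOn m s fun u ↦ ‖f' u‖)
    (ha : a ∈ s) (hb : b ∈ s) (ham : a / m ∈ s) (hbm : b / m ∈ s) :
    ‖f ((a + b) / 2) - (1 / (b - a)) • ∫ u in a..b, f u‖ ≤
      (b - a) / 8 * min (‖f' a‖ + m * ‖f' (b / m)‖) (‖f' b‖ + m * ‖f' (a / m)‖) :=
  norm_midpoint_sub_average_le_of_norm_deriv_add_reflect_le hab hf hderiv hint fun _ hu ↦
    hconv.add_reflect_le_min hm ha hb ham hbm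
      (segment_eq_Icc (𝕜 := ℝ) hab.le ▸ Ioo_subset_Icc_self hu)

end Midpoint

/-- Remark 2.1: midpoint Ostrowski inequality for `|f'|` `m`-convex on `[0,∞)`. -/
theorem stmt_2 (f : ℝ → ℝ) (I : Set ℝ) (hIopen : IsOpen I) (hIconn : I.OrdConnected)
    (hIci : Set.Ici (0:ℝ) ⊆ I) (hf : ∀ y ∈ I, DifferentiableAt ℝ f y)
    (a b : ℝ) (ha : 0 ≤ a) (hab : a < b)
    (hint : IntervalIntegrable (deriv f) volume a b)
    (m : ℝ) (hm0 : 0 < m) (hm1 : m ≤ 1)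
    (hmc : ∀ u ∈ Set.Ici (0:ℝ), ∀ v ∈ Set.Ici (0:ℝ), ∀ t ∈ Set.Icc (0:ℝ) 1,
      |deriv f (t * u + m * (1 - t) * v)| ≤ t * |deriv f u| + m * (1 - t) * |deriv f v|) :
    |f ((a + b) / 2) - (1 / (b - a)) * ∫ u in a..b, f u| ≤
      ((b - a) / 8) * min (|deriv f a| + m * |deriv f (b / m)|)
        (|deriv f b| + m * |deriv f (a / m)|) := by
  have hd : ∀ u ∈ Icc a b, DifferentiableAt ℝ f u := fun u hu ↦ hf u (hIci (ha.trans hu.1))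
  exact stmt_2_general hab (fun u hu ↦ (hd u hu).continuousAt.continuousWithinAt)
    (fun u hu ↦ (hd u (Ioo_subset_Icc_self hu)).hasDerivAt) hint hm0.ne' hmc ha
    (ha.trans hab.le) (div_nonneg ha hm0.le) (div_nonneg (ha.trans hab.le) hm0.le)
end

section
/- Let f : ℝ → ℝ be differentiable on an open interval I containing [0,∞), let 0 ≤ a < b, suppose f' is integrable on [a,b], and suppose |f'| is convex on [a,b]. Then |f((a+b)/2) - (1/(b-a))·∫_a^b f(u) du| ≤ ((b-a)/8)·(|f'(a)| + |f'(b)|). -/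
open MeasureTheory Set intervalIntegral

/-!
Write `c` for the midpoint of `[a, b]` and fold the interval at `c`. The symmetric sum
`F t = f (c + t) + f (c - t)` has `‖F' t‖ ≤ ‖f' (c + t)‖ + ‖f' (c - t)‖`, and convexity bounds the
right-hand side by its value `‖f' a‖ + ‖f' b‖` at the endpoints. Hence
`‖F t - 2 f c‖ ≤ (‖f' a‖ + ‖f' b‖) t`, and integrating over `0 ≤ t ≤ (b - a) / 2` gives the
constant `1 / 8`.
-/

section Convexity

theorem convexOn_map_add_map_swap_le {𝕜 E β : Type*} [Semiring 𝕜] [PartialOrder 𝕜]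
    [AddCommMonoid E] [SMul 𝕜 E] [AddCommMonoid β] [PartialOrder β] [IsOrderedAddMonoid β]
    [Module 𝕜 β] {s : Set E} {g : E → β} (hg : ConvexOn 𝕜 s g) {x y : E} (hx : x ∈ s)
    (hy : y ∈ s) {p q : 𝕜} (hp : 0 ≤ p) (hq : 0 ≤ q) (hpq : p + q = 1) :
    g (p • x + q • y) + g (q • x + p • y) ≤ g x + g y :=
  calc g (p • x + q • y) + g (q • x + p • y)
      ≤ (p • g x + q • g y) + (q • g x + p • g y) :=
        add_le_add (hg.2 hx hy hp hq hpq) (hg.2 hx hy hq hp (by rwa [add_comm]))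
    _ = (p + q) • g x + (p + q) • g y := by simp only [add_smul]; abel
    _ = g x + g y := by rw [hpq, one_smul, one_smul]

theorem convexOn_Icc_map_add_map_reflect_le {𝕜 β : Type*} [Field 𝕜] [LinearOrder 𝕜]
    [IsStrictOrderedRing 𝕜] [AddCommMonoid β] [PartialOrder β] [IsOrderedAddMonoid β] [Module 𝕜 β]
    {a b x : 𝕜} {g : 𝕜 → β} (hg : ConvexOn 𝕜 (Icc a b) g) (hx : x ∈ Icc a b) :
    g x + g (a + b - x) ≤ g a + g b := by
  have hab : a ≤ b := hx.1.trans hx.2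
  obtain ⟨p, q, hp, hq, hpq, rfl⟩ := Icc_subset_segment (𝕜 := 𝕜) hx
  have reflect_eq : a + b - (p • a + q • b) = q • a + p • b := by
    simp only [smul_eq_mul]
    linear_combination (-a - b) * hpq
  rw [reflect_eq]
  exact convexOn_map_add_map_swap_le hg (left_mem_Icc.2 hab) (right_mem_Icc.2 hab) hp hq hpq

end Convexity

section SymmetricSum

variable {E : Type*} [NormedAddCommGroup E] [NormedSpace ℝ E] {f f' : ℝ → E} {c r C : ℝ}

theorem hasDerivWithinAt_add_reflect
    (hf : ∀ x ∈ Icc (c - r) (c + r), HasDerivWithinAt f (f' x) (Icc (c - r) (c + r)) x)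
    {t : ℝ} (ht : t ∈ Icc 0 r) :
    HasDerivWithinAt (fun s ↦ f (c + s) + f (c - s)) (f' (c + t) - f' (c - t)) (Icc 0 r) t := by
  have maps_right : MapsTo (fun s ↦ c + s) (Icc 0 r) (Icc (c - r) (c + r)) :=
    fun s hs ↦ ⟨by linarith [hs.1, hs.2], by linarith [hs.2]⟩
  have maps_left : MapsTo (fun s ↦ c - s) (Icc 0 r) (Icc (c - r) (c + r)) :=
    fun s hs ↦ ⟨by linarith [hs.2], by linarith [hs.1, hs.2]⟩
  have deriv_right := (hf _ (maps_right ht)).scomp t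
    ((hasDerivWithinAt_id t _).const_add c) maps_right
  have deriv_left := (hf _ (maps_left ht)).scomp t
    ((hasDerivWithinAt_id t _).const_sub c) maps_left
  simpa only [Function.comp_apply, one_smul, neg_smul, ← sub_eq_add_neg] using
    deriv_right.fun_add deriv_left

theorem norm_add_reflect_sub_two_smul_le
    (hf : ∀ x ∈ Icc (c - r) (c + r), HasDerivWithinAt f (f' x) (Icc (c - r) (c + r)) x)
    (hC : ∀ t ∈ Icc 0 r, ‖f' (c + t)‖ + ‖f' (c - t)‖ ≤ C) {t : ℝ} (ht : t ∈ Icc 0 r) :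
    ‖f (c + t) + f (c - t) - (2 : ℝ) • f c‖ ≤ C * t := by
  have deriv_bound : ∀ s ∈ Ico 0 r, ‖f' (c + s) - f' (c - s)‖ ≤ C := fun s hs ↦
    (norm_sub_le _ _).trans (hC s (Ico_subset_Icc_self hs))
  simpa only [add_zero, sub_zero, two_smul] using
    norm_image_sub_le_of_norm_deriv_le_segment'
      (fun s hs ↦ hasDerivWithinAt_add_reflect hf hs) deriv_bound t ht

theorem integral_eq_integral_add_reflect
    (hf : IntervalIntegrable f volume (c - r) (c + r)) :
    ∫ x in (c - r)..(c + r), f x = ∫ t in (0)..r, (f (c + t) + f (c - t)) := by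
  have hc : c ∈ uIcc (c - r) (c + r) := by
    rw [mem_uIcc]
    grind
  have hleft : IntervalIntegrable f volume (c - r) c := hf.mono_set (uIcc_subset_uIcc_left hc)
  have hright : IntervalIntegrable f volume c (c + r) := hf.mono_set (uIcc_subset_uIcc_right hc)
  rw [integral_add (by simpa using hright.comp_add_left c)
      (by simpa using (hleft.comp_sub_left c).symm),
    integral_comp_add_left, integral_comp_sub_left, add_zero, sub_zero,
    add_comm (∫ x in c..(c + r), f x), integral_add_adjacent_intervals hleft hright]

theorem norm_integral_sub_smul_center_le [CompleteSpace E] (hr : 0 ≤ r)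
    (hf : ∀ x ∈ Icc (c - r) (c + r), HasDerivWithinAt f (f' x) (Icc (c - r) (c + r)) x)
    (hC : ∀ t ∈ Icc 0 r, ‖f' (c + t)‖ + ‖f' (c - t)‖ ≤ C) :
    ‖(∫ x in (c - r)..(c + r), f x) - (2 * r) • f c‖ ≤ C * r ^ 2 / 2 := by
  have f_integrable : IntervalIntegrable f volume (c - r) (c + r) :=
    ContinuousOn.intervalIntegrable_of_Icc (by linarith) fun x hx ↦ (hf x hx).continuousWithinAt
  have sum_integrable : IntervalIntegrable (fun t ↦ f (c + t) + f (c - t)) volume 0 r :=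
    ContinuousOn.intervalIntegrable_of_Icc hr fun t ht ↦
      (hasDerivWithinAt_add_reflect hf ht).continuousWithinAt
  have fold : (∫ x in (c - r)..(c + r), f x) - (2 * r) • f c =
      ∫ t in (0)..r, (f (c + t) + f (c - t) - (2 : ℝ) • f c) := by
    rw [integral_sub sum_integrable intervalIntegrable_const, intervalIntegral.integral_const,
      sub_zero, smul_smul, mul_comm r, integral_eq_integral_add_reflect f_integrable]
  calc ‖(∫ x in (c - r)..(c + r), f x) - (2 * r) • f c‖
      = ‖∫ t in (0)..r, (f (c + t) + f (c - t) - (2 : ℝ) • f c)‖ := by rw [fold]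
    _ ≤ ∫ t in (0)..r, C * t :=
        norm_integral_le_of_norm_le hr
          (.of_forall fun _ ht ↦ norm_add_reflect_sub_two_smul_le hf hC (Ioc_subset_Icc_self ht))
          (Continuous.intervalIntegrable (by fun_prop) _ _)
    _ = C * r ^ 2 / 2 := by rw [intervalIntegral.integral_const_mul, integral_id]; ring

end SymmetricSum

theorem stmt_3_general {E : Type*} [NormedAddCommGroup E] [NormedSpace ℝ E] [CompleteSpace E]
    {f f' : ℝ → E} {a b : ℝ} (hab : a < b)
    (hf : ∀ x ∈ Icc a b, HasDerivWithinAt f (f' x) (Icc a b) x)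
    (hconv : ConvexOn ℝ (Icc a b) fun x ↦ ‖f' x‖) :
    ‖f ((a + b) / 2) - (1 / (b - a)) • ∫ x in a..b, f x‖ ≤
      (b - a) / 8 * (‖f' a‖ + ‖f' b‖) := by
  obtain ⟨c, r, rfl, rfl⟩ : ∃ c r, a = c - r ∧ b = c + r :=
    ⟨(a + b) / 2, (b - a) / 2, by ring, by ring⟩
  have hr : 0 < r := by linarith
  have midpoint_eq : (c - r + (c + r)) / 2 = c := by ring
  have length_eq : c + r - (c - r) = 2 * r := by ring
  have deriv_bound : ∀ t ∈ Icc 0 r,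
      ‖f' (c + t)‖ + ‖f' (c - t)‖ ≤ ‖f' (c - r)‖ + ‖f' (c + r)‖ := fun t ht ↦ by
    have reflect_eq : c - r + (c + r) - (c + t) = c - t := by ring
    simpa only [reflect_eq] using convexOn_Icc_map_add_map_reflect_le hconv
      (x := c + t) ⟨by linarith [ht.1], by linarith [ht.2]⟩
  rw [midpoint_eq, length_eq]
  calc ‖f c - (1 / (2 * r)) • ∫ x in (c - r)..(c + r), f x‖
      = 1 / (2 * r) * ‖(∫ x in (c - r)..(c + r), f x) - (2 * r) • f c‖ := by
        rw [← norm_smul_of_nonneg (by positivity), smul_sub, smul_smul,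
          one_div_mul_cancel (by positivity), one_smul, norm_sub_rev]
    _ ≤ 1 / (2 * r) * ((‖f' (c - r)‖ + ‖f' (c + r)‖) * r ^ 2 / 2) := by
        gcongr
        exact norm_integral_sub_smul_center_le hr.le hf deriv_bound
    _ = 2 * r / 8 * (‖f' (c - r)‖ + ‖f' (c + r)‖) := by field_simp; ring

/-- Remark 2.2 (A): Kirmaci's inequality, `|f'|` convex on `[a,b]`. -/
theorem stmt_3 (f : ℝ → ℝ) (I : Set ℝ) (hIopen : IsOpen I) (hIconn : I.OrdConnected)
    (hIci : Set.Ici (0:ℝ) ⊆ I) (hf : ∀ y ∈ I, DifferentiableAt ℝ f y)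
    (a b : ℝ) (ha : 0 ≤ a) (hab : a < b)
    (hint : IntervalIntegrable (deriv f) volume a b)
    (hconv : ConvexOn ℝ (Set.Icc a b) (fun u => |deriv f u|)) :
    |f ((a + b) / 2) - (1 / (b - a)) * ∫ u in a..b, f u| ≤
      ((b - a) / 8) * (|deriv f a| + |deriv f b|) :=
  stmt_3_general hab
    (fun x hx ↦ (hf x (hIci (ha.trans hx.1))).hasDerivAt.hasDerivWithinAt) hconv
end

section
/- Let f : ℝ → ℝ be differentiable on an open interval I containing [0,∞), let 0 ≤ a < b, suppose f' is integrable on [a,b], suppose |f'| is convex on [a,b], and suppose there is M > 0 with |f'(x)| ≤ M for all x ∈ [a,b]. Then |f((a+b)/2) - (1/(b-a))·∫_a^b f(u) du| ≤ M·(b-a)/4. -/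
open MeasureTheory Set intervalIntegral

/-!
By the mean value inequality `f` is `M`-Lipschitz on `[a, b]`, so the distance from `f c` to the
average of `f` is at most `M` times the average of `|u - c|`, that is
`M * ((c - a) ^ 2 + (b - c) ^ 2) / (2 * (b - a))` (Ostrowski's inequality). At the midpoint this
is `M * (b - a) / 4`.
-/

theorem integral_abs_sub_of_mem_Icc {a b c : ℝ} (hc : c ∈ Icc a b) :
    ∫ u in a..b, |u - c| = ((c - a) ^ 2 + (b - c) ^ 2) / 2 := by
  have h_integrable (x y : ℝ) : IntervalIntegrable (fun u ↦ |u - c|) volume x y :=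
    Continuous.intervalIntegrable (by fun_prop) x y
  have h_uIoc (x : ℝ) : ∫ u in uIoc c x, |u - c| = (x - c) ^ 2 / 2 := by
    simpa only [pow_one, one_add_one_eq_two, Nat.cast_one, sq_abs] using
      integral_pow_abs_sub_uIoc (a := c) (b := x) 1
  have h_left : ∫ u in a..c, |u - c| = (c - a) ^ 2 / 2 := by
    rw [integral_of_le hc.1, ← uIoc_of_le hc.1, uIoc_comm, h_uIoc, sub_sq_comm]
  have h_right : ∫ u in c..b, |u - c| = (b - c) ^ 2 / 2 := by
    rw [integral_of_le hc.2, ← uIoc_of_le hc.2, h_uIoc]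
  rw [← integral_add_adjacent_intervals (h_integrable a c) (h_integrable c b), h_left, h_right,
    add_div]

section Ostrowski

variable {E : Type*} [NormedAddCommGroup E] [NormedSpace ℝ E] [CompleteSpace E]
  {f f' : ℝ → E} {a b c M : ℝ}

theorem sub_intervalAverage_eq (hab : a ≠ b) (hf : IntervalIntegrable f volume a b) (v : E) :
    v - ⨍ u in a..b, f u = (b - a)⁻¹ • ∫ u in a..b, (v - f u) := by
  rw [interval_average_eq, intervalIntegral.integral_sub intervalIntegrable_const hf,
    intervalIntegral.integral_const, smul_sub, inv_smul_smul₀ (sub_ne_zero.2 hab.symm)]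

theorem norm_sub_intervalAverage_le_of_norm_sub_le (hab : a < b) (hc : c ∈ Icc a b)
    (hf : IntervalIntegrable f volume a b)
    (h_dist : ∀ u ∈ Icc a b, ‖f c - f u‖ ≤ M * |u - c|) :
    ‖f c - ⨍ u in a..b, f u‖ ≤ M * ((c - a) ^ 2 + (b - c) ^ 2) / (2 * (b - a)) := by
  have h_integral : ‖∫ u in a..b, (f c - f u)‖ ≤ ∫ u in a..b, M * |u - c| :=
    intervalIntegral.norm_integral_le_of_norm_le hab.le
      (.of_forall fun u hu ↦ h_dist u (Ioc_subset_Icc_self hu))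
      (Continuous.intervalIntegrable (by fun_prop) a b)
  have h_inv_nonneg : 0 ≤ (b - a)⁻¹ := inv_nonneg.2 (sub_nonneg.2 hab.le)
  calc ‖f c - ⨍ u in a..b, f u‖
      = (b - a)⁻¹ * ‖∫ u in a..b, (f c - f u)‖ := by
        rw [sub_intervalAverage_eq hab.ne hf, norm_smul_of_nonneg h_inv_nonneg]
    _ ≤ (b - a)⁻¹ * ∫ u in a..b, M * |u - c| := by gcongr
    _ = M * ((c - a) ^ 2 + (b - c) ^ 2) / (2 * (b - a)) := by
        rw [intervalIntegral.integral_const_mul, integral_abs_sub_of_mem_Icc hc]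
        field

theorem norm_sub_intervalAverage_le_of_norm_hasDerivWithinAt_le (hab : a < b) (hc : c ∈ Icc a b)
    (hf : ∀ u ∈ Icc a b, HasDerivWithinAt f (f' u) (Icc a b) u)
    (h_bound : ∀ u ∈ Icc a b, ‖f' u‖ ≤ M) :
    ‖f c - ⨍ u in a..b, f u‖ ≤ M * ((c - a) ^ 2 + (b - c) ^ 2) / (2 * (b - a)) := by
  have h_cont : ContinuousOn f (Icc a b) := fun u hu ↦ (hf u hu).continuousWithinAt
  refine norm_sub_intervalAverage_le_of_norm_sub_le hab hc
    (h_cont.intervalIntegrable_of_Icc hab.le) fun u hu ↦ ?_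
  rw [abs_sub_comm]
  exact (convex_Icc a b).norm_image_sub_le_of_norm_hasDerivWithin_le hf h_bound hu hc

theorem stmt_4_general (hab : a < b)
    (hf : ∀ u ∈ Icc a b, HasDerivWithinAt f (f' u) (Icc a b) u)
    (h_bound : ∀ u ∈ Icc a b, ‖f' u‖ ≤ M) :
    ‖f ((a + b) / 2) - (1 / (b - a)) • ∫ u in a..b, f u‖ ≤ M * (b - a) / 4 := by
  have h_mid : (a + b) / 2 ∈ Icc a b := ⟨by linarith, by linarith⟩
  have h_ne : b - a ≠ 0 := sub_ne_zero.2 hab.ne'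
  rw [one_div, ← interval_average_eq]
  calc ‖f ((a + b) / 2) - ⨍ u in a..b, f u‖
      ≤ M * (((a + b) / 2 - a) ^ 2 + (b - (a + b) / 2) ^ 2) / (2 * (b - a)) :=
        norm_sub_intervalAverage_le_of_norm_hasDerivWithinAt_le hab h_mid hf h_bound
    _ = M * (b - a) / 4 := by
        field_simp
        ring

end Ostrowski

/-- Remark 2.2 (B): midpoint inequality under a bound `|f'| ≤ M` on `[a,b]`. -/
theorem stmt_4 (f : ℝ → ℝ) (I : Set ℝ) (hIopen : IsOpen I) (hIconn : I.OrdConnected)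
    (hIci : Set.Ici (0:ℝ) ⊆ I) (hf : ∀ y ∈ I, DifferentiableAt ℝ f y)
    (a b : ℝ) (ha : 0 ≤ a) (hab : a < b)
    (hint : IntervalIntegrable (deriv f) volume a b)
    (hconv : ConvexOn ℝ (Set.Icc a b) (fun u => |deriv f u|))
    (M : ℝ) (hM : 0 < M) (hbound : ∀ u ∈ Set.Icc a b, |deriv f u| ≤ M) :
    |f ((a + b) / 2) - (1 / (b - a)) * ∫ u in a..b, f u| ≤ M * (b - a) / 4 :=
  stmt_4_general hab
    (fun u hu ↦ (hf u (hIci (ha.trans hu.1))).hasDerivAt.hasDerivWithinAt) hbound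
end

section
/- Let f : ℝ → ℝ be differentiable on an open interval I containing [0,∞), let 0 ≤ a < b, suppose f' is integrable on [a,b], let p > 1 and q = p/(p-1), and suppose |f'|^q is m-convex on [0,∞) for some fixed m ∈ (0,1]. Then |f((a+b)/2) - (1/(b-a))·∫_a^b f(u) du| ≤ ((b-a)/4)·(μ₁^{1/q} + μ₂^{1/q}), where μ₁ = min{ (|f'(b)|^q + m·|f'((a+b)/(2m))|^q)/2 , (|f'((a+b)/2)|^q + m·|f'(b/m)|^q)/2 } and μ₂ = min{ (|f'(a)|^q + m·|f'((a+b)/(2m))|^q)/2 , (|f'((a+b)/2)|^q + m·|f'(a/m)|^q)/2 }. -/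
open MeasureTheory Set intervalIntegral

/-!
Split `[a, b]` at `c`. On each piece `[x, y]` the fundamental theorem of calculus bounds
`‖f c - f u‖` by `∫ ‖f'‖`, so everything reduces to bounding `∫ ‖f'‖` over the piece. Averaging
with the reflection `u ↦ x + y - u` leaves that integral unchanged, and `m`-convexity applied at the
two reflected points, with weights `t` and `1 - t`, bounds the sum of the two values of `‖f'‖ ^ q`
by a constant: the weights add up and disappear. Convexity of `s ↦ s ^ q` extracts the `q`-th root.
-/

/-- `m`-convexity on `[0, ∞)` of a function defined on all of `ℝ`. It is meant for `0 < m`, so that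
only values at nonnegative arguments enter. -/
def MConvex (m : ℝ) (g : ℝ → ℝ) : Prop :=
  ∀ u ∈ Ici (0 : ℝ), ∀ v ∈ Ici (0 : ℝ), ∀ t ∈ Icc (0 : ℝ) 1,
    g (t * u + m * (1 - t) * v) ≤ t * g u + m * (1 - t) * g v

/-- The bound which `m`-convexity of `g` provides for the mean `(g u + g (x + y - u)) / 2` of `g`
over two points of the interval between `x` and `y` that are symmetric about its midpoint. The
minimum is over which of the two endpoints is rescaled by `1 / m`. The constants `μ₁` and `μ₂` of
the midpoint inequality are of this form, with `g = |f'| ^ q`. -/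
noncomputable def reflectionBound (m : ℝ) (g : ℝ → ℝ) (x y : ℝ) : ℝ :=
  min ((g x + m * g (y / m)) / 2) ((g y + m * g (x / m)) / 2)

theorem reflectionBound_comm (m : ℝ) (g : ℝ → ℝ) (x y : ℝ) :
    reflectionBound m g x y = reflectionBound m g y x :=
  min_comm _ _

namespace MConvex

variable {m x y u : ℝ} {g : ℝ → ℝ}

theorem add_reflect_le (hg : MConvex m g) (hm : 0 < m) (hx : 0 ≤ x) (hy : 0 ≤ y)
    (hu : u ∈ uIcc x y) : g u + g (x + y - u) ≤ g x + m * g (y / m) := by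
  rw [← segment_eq_uIcc] at hu
  obtain ⟨t, s, ht, hs, hts, rfl⟩ := hu
  obtain rfl : s = 1 - t := by linarith
  have hy' : 0 ≤ y / m := div_nonneg hy hm.le
  have at_point := hg x hx (y / m) hy' t ⟨ht, by linarith⟩
  have at_reflection := hg x hx (y / m) hy' (1 - t) ⟨hs, by linarith⟩
  have point_eq : t * x + m * (1 - t) * (y / m) = t • x + (1 - t) • y := by
    simp only [smul_eq_mul]
    field_simp
  have reflection_eq :
      (1 - t) * x + m * (1 - (1 - t)) * (y / m) = x + y - (t • x + (1 - t) • y) := by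
    simp only [smul_eq_mul]
    field_simp
    ring
  rw [point_eq] at at_point
  rw [reflection_eq] at at_reflection
  linarith

theorem mean_reflect_le_reflectionBound (hg : MConvex m g) (hm : 0 < m) (hx : 0 ≤ x) (hy : 0 ≤ y)
    (hu : u ∈ uIcc x y) : (g u + g (x + y - u)) / 2 ≤ reflectionBound m g x y := by
  have bound_xy := hg.add_reflect_le hm hx hy hu
  have bound_yx := hg.add_reflect_le hm hy hx (uIcc_comm x y ▸ hu)
  rw [add_comm y x] at bound_yx
  exact le_min (by linarith) (by linarith)

end MConvex

theorem mean_le_rpow_inv_of_mean_rpow_le {x y K q : ℝ} (hx : 0 ≤ x) (hy : 0 ≤ y) (hq : 1 ≤ q)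
    (h : (x ^ q + y ^ q) / 2 ≤ K) : (x + y) / 2 ≤ K ^ (1 / q) := by
  have hxy : 0 ≤ (x + y) / 2 := by positivity
  have mean_rpow_le : ((x + y) / 2) ^ q ≤ (x ^ q + y ^ q) / 2 := by
    have := (convexOn_rpow hq).2 (mem_Ici.2 hx) (mem_Ici.2 hy)
      (by norm_num : (0 : ℝ) ≤ 1 / 2) (by norm_num : (0 : ℝ) ≤ 1 / 2) (by norm_num)
    simp only [smul_eq_mul, ← mul_add] at this
    simpa only [one_div_mul_eq_div] using this
  rw [one_div, Real.le_rpow_inv_iff_of_pos hxy _ (by linarith)]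
  · exact mean_rpow_le.trans h
  · exact le_trans (by positivity) h

theorem integral_le_of_mean_reflect_le {g : ℝ → ℝ} {x y C : ℝ} (hxy : x ≤ y)
    (hg : IntervalIntegrable g volume x y)
    (h : ∀ u ∈ Icc x y, (g u + g (x + y - u)) / 2 ≤ C) :
    ∫ u in x..y, g u ≤ (y - x) * C := by
  have hg_reflect : IntervalIntegrable (fun u => g (x + y - u)) volume x y := by
    simpa using (hg.comp_sub_left (x + y)).symm
  have integral_reflect : ∫ u in x..y, g (x + y - u) = ∫ u in x..y, g u := by
    simp [integral_comp_sub_left g (x + y)]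
  calc ∫ u in x..y, g u
      = ∫ u in x..y, (g u + g (x + y - u)) / 2 := by
        rw [intervalIntegral.integral_div, integral_add hg hg_reflect, integral_reflect,
          add_self_div_two]
    _ ≤ ∫ _ in x..y, C :=
        integral_mono_on hxy ((hg.add hg_reflect).div_const 2) intervalIntegrable_const h
    _ = (y - x) * C := by simp

theorem integral_norm_le_of_mConvex {E : Type*} [NormedAddCommGroup E] {f' : ℝ → E}
    {x y m q : ℝ} (hx : 0 ≤ x) (hxy : x ≤ y) (hint : IntervalIntegrable f' volume x y)
    (hq : 1 ≤ q) (hm : 0 < m) (hconv : MConvex m fun u => ‖f' u‖ ^ q) :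
    ∫ u in x..y, ‖f' u‖ ≤ (y - x) * reflectionBound m (fun u => ‖f' u‖ ^ q) x y ^ (1 / q) :=
  integral_le_of_mean_reflect_le hxy hint.norm fun _ hu =>
    mean_le_rpow_inv_of_mean_rpow_le (norm_nonneg _) (norm_nonneg _) hq <|
      hconv.mean_reflect_le_reflectionBound hm hx (hx.trans hxy) (Icc_subset_uIcc hu)

section NormedSpace

variable {E : Type*} [NormedAddCommGroup E] [NormedSpace ℝ E]

theorem sub_average_eq_smul_add {f : ℝ → E} {a b c : ℝ} (hab : a ≠ b)
    (hac : IntervalIntegrable f volume a c) (hcb : IntervalIntegrable f volume c b) :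
    f c - (1 / (b - a)) • ∫ u in a..b, f u =
      (1 / (b - a)) •
        (((c - a) • f c - ∫ u in a..c, f u) + ((b - c) • f c - ∫ u in c..b, f u)) := by
  have hba : b - a ≠ 0 := sub_ne_zero.2 hab.symm
  have f_eq : f c = (1 / (b - a)) • (b - a) • f c := by
    rw [smul_smul, one_div_mul_cancel hba, one_smul]
  rw [← integral_add_adjacent_intervals hac hcb]
  nth_rewrite 1 [f_eq]
  module

variable [CompleteSpace E] {f f' : ℝ → E}

theorem norm_sub_le_integral_norm_of_hasDerivAt {x y c u : ℝ}
    (hf : ∀ z ∈ Icc x y, HasDerivAt f (f' z) z) (hint : IntervalIntegrable f' volume x y)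
    (hc : c ∈ Icc x y) (hu : u ∈ Icc x y) : ‖f c - f u‖ ≤ ∫ z in x..y, ‖f' z‖ := by
  have hxy : x ≤ y := hc.1.trans hc.2
  have uIcc_subset : uIcc u c ⊆ uIcc x y := by
    simpa only [uIcc_of_le hxy] using uIcc_subset_Icc hu hc
  calc ‖f c - f u‖
      = ‖∫ z in u..c, f' z‖ := by
        rw [integral_eq_sub_of_hasDerivAt (fun z hz => hf z (uIcc_subset_Icc hu hc hz))
          (hint.mono_set uIcc_subset)]
    _ ≤ ∫ z in uIoc u c, ‖f' z‖ := norm_integral_le_integral_norm_uIoc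
    _ ≤ ∫ z in uIoc x y, ‖f' z‖ :=
        setIntegral_mono_set hint.def'.norm (.of_forall fun _ => norm_nonneg _)
          (uIoc_subset_uIoc_of_uIcc_subset_uIcc uIcc_subset).eventuallyLE
    _ = ∫ z in x..y, ‖f' z‖ := by rw [uIoc_of_le hxy, integral_of_le hxy]

theorem norm_smul_sub_integral_le_of_hasDerivAt {x y c : ℝ}
    (hf : ∀ z ∈ Icc x y, HasDerivAt f (f' z) z) (hint : IntervalIntegrable f' volume x y)
    (hc : c ∈ Icc x y) :
    ‖(y - x) • f c - ∫ u in x..y, f u‖ ≤ (y - x) * ∫ u in x..y, ‖f' u‖ := by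
  have hxy : x ≤ y := hc.1.trans hc.2
  have hf_int : IntervalIntegrable f volume x y :=
    ContinuousOn.intervalIntegrable_of_Icc hxy fun z hz => (hf z hz).continuousAt.continuousWithinAt
  calc ‖(y - x) • f c - ∫ u in x..y, f u‖
      = ‖∫ u in x..y, (f c - f u)‖ := by
        rw [integral_sub intervalIntegrable_const hf_int,
          intervalIntegral.integral_const]
    _ ≤ (∫ u in x..y, ‖f' u‖) * |y - x| := by
        refine norm_integral_le_of_norm_le_const fun u hu => ?_
        rw [uIoc_of_le hxy] at hu
        exact norm_sub_le_integral_norm_of_hasDerivAt hf hint hc (Ioc_subset_Icc_self hu)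
    _ = (y - x) * ∫ u in x..y, ‖f' u‖ := by rw [abs_of_nonneg (sub_nonneg.2 hxy), mul_comm]

theorem norm_smul_sub_integral_le_of_mConvex {x y c m q : ℝ} (hx : 0 ≤ x)
    (hf : ∀ z ∈ Icc x y, HasDerivAt f (f' z) z) (hint : IntervalIntegrable f' volume x y)
    (hc : c ∈ Icc x y) (hq : 1 ≤ q) (hm : 0 < m) (hconv : MConvex m fun u => ‖f' u‖ ^ q) :
    ‖(y - x) • f c - ∫ u in x..y, f u‖ ≤
      (y - x) ^ 2 * reflectionBound m (fun u => ‖f' u‖ ^ q) x y ^ (1 / q) := by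
  have hxy : x ≤ y := hc.1.trans hc.2
  rw [sq, mul_assoc]
  exact (norm_smul_sub_integral_le_of_hasDerivAt hf hint hc).trans <|
    mul_le_mul_of_nonneg_left (integral_norm_le_of_mConvex hx hxy hint hq hm hconv)
      (sub_nonneg.2 hxy)

theorem norm_sub_average_le_of_mConvex {a b c m q : ℝ} (ha : 0 ≤ a) (hab : a < b)
    (hf : ∀ z ∈ Icc a b, HasDerivAt f (f' z) z) (hint : IntervalIntegrable f' volume a b)
    (hc : c ∈ Icc a b) (hq : 1 ≤ q) (hm : 0 < m) (hconv : MConvex m fun u => ‖f' u‖ ^ q) :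
    ‖f c - (1 / (b - a)) • ∫ u in a..b, f u‖ ≤
      1 / (b - a) * ((c - a) ^ 2 * reflectionBound m (fun u => ‖f' u‖ ^ q) a c ^ (1 / q) +
        (b - c) ^ 2 * reflectionBound m (fun u => ‖f' u‖ ^ q) c b ^ (1 / q)) := by
  have hleft : Icc a c ⊆ Icc a b := Icc_subset_Icc_right hc.2
  have hright : Icc c b ⊆ Icc a b := Icc_subset_Icc_left hc.1
  have hcont : ContinuousOn f (Icc a b) := fun z hz => (hf z hz).continuousAt.continuousWithinAt
  have hint_left : IntervalIntegrable f' volume a c :=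
    hint.mono_set (by simpa only [uIcc_of_le, hc.1, hab.le] using hleft)
  have hint_right : IntervalIntegrable f' volume c b :=
    hint.mono_set (by simpa only [uIcc_of_le, hc.2, hab.le] using hright)
  have hba : 0 ≤ 1 / (b - a) := one_div_nonneg.2 (sub_nonneg.2 hab.le)
  rw [sub_average_eq_smul_add hab.ne ((hcont.mono hleft).intervalIntegrable_of_Icc hc.1)
    ((hcont.mono hright).intervalIntegrable_of_Icc hc.2), norm_smul, Real.norm_of_nonneg hba]
  refine mul_le_mul_of_nonneg_left (norm_add_le_of_le ?_ ?_) hba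
  · exact norm_smul_sub_integral_le_of_mConvex ha (fun z hz => hf z (hleft hz)) hint_left
      (right_mem_Icc.2 hc.1) hq hm hconv
  · exact norm_smul_sub_integral_le_of_mConvex (ha.trans hc.1) (fun z hz => hf z (hright hz))
      hint_right (left_mem_Icc.2 hc.2) hq hm hconv

theorem stmt_7_general {a b m q : ℝ} (ha : 0 ≤ a) (hab : a < b)
    (hf : ∀ z ∈ Icc a b, HasDerivAt f (f' z) z) (hint : IntervalIntegrable f' volume a b)
    (hq : 1 ≤ q) (hm : 0 < m) (hconv : MConvex m fun u => ‖f' u‖ ^ q) :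
    ‖f ((a + b) / 2) - (1 / (b - a)) • ∫ u in a..b, f u‖ ≤
      (b - a) / 4 *
        (reflectionBound m (fun u => ‖f' u‖ ^ q) b ((a + b) / 2) ^ (1 / q) +
          reflectionBound m (fun u => ‖f' u‖ ^ q) a ((a + b) / 2) ^ (1 / q)) := by
  have hmid : (a + b) / 2 ∈ Icc a b := ⟨by linarith, by linarith⟩
  have hba : b - a ≠ 0 := (sub_pos.2 hab).ne'
  refine (norm_sub_average_le_of_mConvex ha hab hf hint hmid hq hm hconv).trans_eq ?_
  rw [reflectionBound_comm m _ b]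
  field_simp
  ring

end NormedSpace

/-- Corollary 2.2: midpoint inequality for `|f'|^q` `m`-convex on `[0,∞)`, `q = p/(p-1)`. -/
theorem stmt_7 (f : ℝ → ℝ) (I : Set ℝ) (hIopen : IsOpen I) (hIconn : I.OrdConnected)
    (hIci : Set.Ici (0:ℝ) ⊆ I) (hf : ∀ y ∈ I, DifferentiableAt ℝ f y)
    (a b : ℝ) (ha : 0 ≤ a) (hab : a < b)
    (hint : IntervalIntegrable (deriv f) volume a b)
    (p q : ℝ) (hp : 1 < p) (hq : q = p / (p - 1))
    (m : ℝ) (hm0 : 0 < m) (hm1 : m ≤ 1)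
    (hmc : ∀ u ∈ Set.Ici (0:ℝ), ∀ v ∈ Set.Ici (0:ℝ), ∀ t ∈ Set.Icc (0:ℝ) 1,
      |deriv f (t * u + m * (1 - t) * v)| ^ q ≤
        t * |deriv f u| ^ q + m * (1 - t) * |deriv f v| ^ q) :
    |f ((a + b) / 2) - (1 / (b - a)) * ∫ u in a..b, f u| ≤
      ((b - a) / 4) *
        ((min ((|deriv f b| ^ q + m * |deriv f ((a + b) / (2 * m))| ^ q) / 2)
            ((|deriv f ((a + b) / 2)| ^ q + m * |deriv f (b / m)| ^ q) / 2)) ^ (1 / q)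
          + (min ((|deriv f a| ^ q + m * |deriv f ((a + b) / (2 * m))| ^ q) / 2)
            ((|deriv f ((a + b) / 2)| ^ q + m * |deriv f (a / m)| ^ q) / 2)) ^ (1 / q)) := by
  have hq1 : 1 ≤ q := by
    rw [hq, one_le_div (by linarith)]
    linarith
  rw [← div_div]
  exact stmt_7_general ha hab (fun z hz => (hf z (hIci (ha.trans hz.1))).hasDerivAt) hint hq1 hm0
    hmc
end

section
/- Let f : ℝ → ℝ be differentiable on an open interval I containing [0,∞), let 0 ≤ a < b, suppose f' is integrable on [a,b], let q ∈ [1,∞), and suppose |f'|^q is m-convex on [0,∞) for some fixed m ∈ (0,1]. Then |f((a+b)/2) - (1/(b-a))·∫_a^b f(u) du| ≤ (b-a)·(3^{1-1/q}/8)·( |f'(a)| + m^{1/q}·|f'(b/m)| ). -/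
open MeasureTheory Set intervalIntegral

/-!
Put `c = (a + b) / 2` and `h = (b - a) / 2`. Folding the interval at its midpoint gives
`∫ x in a..b, f x = ∫ s in 0..h, (f (c + s) + f (c - s))`, and the integrand differs from its value
`2 f(c)` at `s = 0` by at most `K s` as soon as `|f' (c + s) - f' (c - s)| ≤ K`; integrating, the
error of the midpoint rule is at most `K h ^ 2 / 2`. Adding the `m`-convexity bounds at the
reflected points `c + s` and `c - s`, whose weights are `t, 1 - t` and `1 - t, t`, yields
`|f' (c + s)| ^ q + |f' (c - s)| ^ q ≤ |f' a| ^ q + m |f' (b / m)| ^ q` for every `s`, and the power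
mean inequality turns this into a value of `K`, with `2 ^ (1 - 1 / q)` in place of
`3 ^ (1 - 1 / q)`.
-/

open scoped NNReal

section PowerMean

variable {q y z : ℝ}

theorem add_le_two_rpow_mul_rpow_of_rpow_add_rpow_le {S : ℝ} (hy : 0 ≤ y) (hz : 0 ≤ z)
    (hq : 1 ≤ q) (hS : y ^ q + z ^ q ≤ S) : y + z ≤ 2 ^ (1 - 1 / q) * S ^ (1 / q) := by
  have hq0 : 0 < q := by linarith
  have hS0 : 0 ≤ S := le_trans (by positivity) hS
  have hmean : (y + z) ^ q ≤ 2 ^ (q - 1) * (y ^ q + z ^ q) := by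
    lift y to ℝ≥0 using hy
    lift z to ℝ≥0 using hz
    exact_mod_cast NNReal.rpow_add_le_mul_rpow_add_rpow y z hq
  calc y + z ≤ (2 ^ (q - 1) * S) ^ (1 / q) := by
        rw [one_div, Real.le_rpow_inv_iff_of_pos (by positivity) (by positivity) hq0]
        exact hmean.trans (by gcongr)
    _ = 2 ^ (1 - 1 / q) * S ^ (1 / q) := by
        rw [Real.mul_rpow (by positivity) hS0, ← Real.rpow_mul zero_le_two, mul_one_div, sub_div,
          div_self hq0.ne']

theorem rpow_add_mul_rpow_rpow_one_div_le {m : ℝ} (hq : 1 ≤ q) (hm : 0 ≤ m) (hy : 0 ≤ y)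
    (hz : 0 ≤ z) : (y ^ q + m * z ^ q) ^ (1 / q) ≤ y + m ^ (1 / q) * z := by
  have hq0 : q ≠ 0 := by linarith
  have hmz : (m ^ (1 / q) * z) ^ q = m * z ^ q := by
    rw [Real.mul_rpow (by positivity) hz, ← Real.rpow_mul hm, one_div_mul_cancel hq0,
      Real.rpow_one]
  rw [← hmz]
  exact Real.rpow_add_rpow_le_add hy (by positivity) hq

end PowerMean

section MidpointRule

variable {E : Type*} [NormedAddCommGroup E] [NormedSpace ℝ E] {f f' : ℝ → E} {a b c h K q : ℝ}

theorem integral_sub_add_eq_integral_add_add_sub (hleft : IntervalIntegrable f volume (c - h) c)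
    (hright : IntervalIntegrable f volume c (c + h)) :
    ∫ x in (c - h)..(c + h), f x = ∫ s in 0..h, (f (c + s) + f (c - s)) := by
  have hadd : IntervalIntegrable (fun s ↦ f (c + s)) volume 0 h := by
    simpa using hright.comp_add_left c
  have hsub : IntervalIntegrable (fun s ↦ f (c - s)) volume 0 h := by
    simpa using (hleft.comp_sub_left c).symm
  rw [intervalIntegral.integral_add hadd hsub, integral_comp_add_left, integral_comp_sub_left,
    add_zero, sub_zero, ← integral_add_adjacent_intervals hleft hright]
  exact add_comm _ _

variable [CompleteSpace E]

theorem norm_integral_sub_smul_left_le_of_norm_deriv_right_le (hab : a ≤ b)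
    (hf : ContinuousOn f (Icc a b)) (hf' : ∀ x ∈ Ico a b, HasDerivWithinAt f (f' x) (Ici x) x)
    (hK : ∀ x ∈ Ico a b, ‖f' x‖ ≤ K) :
    ‖(∫ x in a..b, f x) - (b - a) • f a‖ ≤ K * (b - a) ^ 2 / 2 := by
  have hlip : ∀ x ∈ Icc a b, ‖f x - f a‖ ≤ K * (x - a) :=
    norm_image_sub_le_of_norm_deriv_right_le_segment hf hf' hK
  calc ‖(∫ x in a..b, f x) - (b - a) • f a‖
      = ‖∫ x in a..b, (f x - f a)‖ := by
        rw [intervalIntegral.integral_sub (hf.intervalIntegrable_of_Icc hab)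
          intervalIntegrable_const, intervalIntegral.integral_const]
    _ ≤ ∫ x in a..b, K * (x - a) :=
        norm_integral_le_of_norm_le hab (ae_of_all _ fun x hx ↦ hlip x (Ioc_subset_Icc_self hx))
          (Continuous.intervalIntegrable (by fun_prop) _ _)
    _ = K * (b - a) ^ 2 / 2 := by
        rw [intervalIntegral.integral_const_mul, integral_comp_sub_right fun x : ℝ ↦ x, integral_id]
        ring

theorem norm_integral_sub_smul_midpoint_le (hh : 0 ≤ h)
    (hf : ContinuousOn f (Icc (c - h) (c + h)))
    (hf' : ∀ x ∈ Ioo (c - h) (c + h), HasDerivAt f (f' x) x)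
    (hK : ∀ s ∈ Ico 0 h, ‖f' (c + s) - f' (c - s)‖ ≤ K) :
    ‖(∫ x in (c - h)..(c + h), f x) - (2 * h) • f c‖ ≤ K * h ^ 2 / 2 := by
  have hcont : ContinuousOn (fun s ↦ f (c + s) + f (c - s)) (Icc 0 h) :=
    (hf.comp (by fun_prop) fun s hs ↦ ⟨by linarith [hs.1], by linarith [hs.2]⟩).add
      (hf.comp (by fun_prop) fun s hs ↦ ⟨by linarith [hs.2], by linarith [hs.1]⟩)
  have hderiv : ∀ s ∈ Ico 0 h,
      HasDerivAt (fun s ↦ f (c + s) + f (c - s)) (f' (c + s) - f' (c - s)) s := by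
    intro s ⟨hs0, hsh⟩
    rw [sub_eq_add_neg]
    exact ((hf' _ ⟨by linarith, by linarith⟩).comp_const_add c s).add
      ((hf' _ ⟨by linarith, by linarith⟩).comp_const_sub c s)
  have hfold := norm_integral_sub_smul_left_le_of_norm_deriv_right_le hh hcont
    (fun s hs ↦ (hderiv s hs).hasDerivWithinAt) hK
  have hfint : IntervalIntegrable f volume (c - h) (c + h) :=
    hf.intervalIntegrable_of_Icc (by linarith)
  have hc : c ∈ uIcc (c - h) (c + h) := mem_uIcc_of_le (by linarith) (by linarith)
  rw [integral_sub_add_eq_integral_add_add_sub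
    (hfint.mono_set (uIcc_subset_uIcc_left hc)) (hfint.mono_set (uIcc_subset_uIcc_right hc)),
    mul_comm, mul_smul, two_smul]
  simpa only [add_zero, sub_zero] using hfold

theorem norm_midpoint_sub_average_le_of_rpow_add_rpow_reflect_le {S : ℝ} (hab : a < b)
    (hf : ContinuousOn f (Icc a b)) (hf' : ∀ x ∈ Ioo a b, HasDerivAt f (f' x) x) (hq : 1 ≤ q)
    (hS : ∀ x ∈ Ioo a b, ‖f' x‖ ^ q + ‖f' (a + b - x)‖ ^ q ≤ S) :
    ‖f ((a + b) / 2) - (1 / (b - a)) • ∫ x in a..b, f x‖ ≤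
      (b - a) * (2 ^ (1 - 1 / q) / 8) * S ^ (1 / q) := by
  obtain ⟨c, hc⟩ : ∃ c, c = (a + b) / 2 := ⟨_, rfl⟩
  obtain ⟨h, hh⟩ : ∃ h, h = (b - a) / 2 := ⟨_, rfl⟩
  obtain rfl : a = c - h := by linarith
  obtain rfl : b = c + h := by linarith
  have hh0 : 0 < h := by linarith
  have hK : ∀ s ∈ Ico 0 h, ‖f' (c + s) - f' (c - s)‖ ≤ 2 ^ (1 - 1 / q) * S ^ (1 / q) := by
    intro s ⟨hs0, hsh⟩
    refine (norm_sub_le _ _).trans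
      (add_le_two_rpow_mul_rpow_of_rpow_add_rpow_le (norm_nonneg _) (norm_nonneg _) hq ?_)
    have hreflect : c - h + (c + h) - (c + s) = c - s := by ring
    simpa only [hreflect] using hS (c + s) ⟨by linarith, by linarith⟩
  have herror := norm_integral_sub_smul_midpoint_le hh0.le hf hf' hK
  have hwidth : c + h - (c - h) = 2 * h := by ring
  rw [← hc, hwidth]
  calc ‖f c - (1 / (2 * h)) • ∫ x in (c - h)..(c + h), f x‖
      = 1 / (2 * h) * ‖(∫ x in (c - h)..(c + h), f x) - (2 * h) • f c‖ := by
        rw [norm_sub_rev, ← norm_smul_of_nonneg (by positivity), smul_sub, smul_smul,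
          one_div_mul_cancel (by positivity), one_smul]
    _ ≤ 1 / (2 * h) * (2 ^ (1 - 1 / q) * S ^ (1 / q) * h ^ 2 / 2) := by gcongr
    _ = 2 * h * (2 ^ (1 - 1 / q) / 8) * S ^ (1 / q) := by
        field_simp
        ring

end MidpointRule

theorem add_reflect_le_of_mconvex_endpoints {φ : ℝ → ℝ} {a b m x : ℝ} (hm : m ≠ 0)
    (hφ : ∀ t ∈ Ioo (0 : ℝ) 1,
      φ (t * a + m * (1 - t) * (b / m)) ≤ t * φ a + m * (1 - t) * φ (b / m))
    (hx : x ∈ Ioo a b) : φ x + φ (a + b - x) ≤ φ a + m * φ (b / m) := by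
  have hab : 0 < b - a := sub_pos.2 (hx.1.trans hx.2)
  obtain ⟨t, ht⟩ : ∃ t, t = (b - x) / (b - a) := ⟨_, rfl⟩
  have ht0 : 0 < t := ht ▸ div_pos (sub_pos.2 hx.2) hab
  have ht1 : t < 1 := by rw [ht, div_lt_one hab]; linarith [hx.1]
  have hxt : t * a + m * (1 - t) * (b / m) = x := by rw [ht]; field_simp; ring
  have hxt' : (1 - t) * a + m * (1 - (1 - t)) * (b / m) = a + b - x := by
    rw [ht]; field_simp; ring
  have hφx := hφ t ⟨ht0, ht1⟩
  have hφx' := hφ (1 - t) ⟨by linarith, by linarith⟩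
  rw [hxt] at hφx
  rw [hxt'] at hφx'
  linarith

theorem stmt_12_general {E : Type*} [NormedAddCommGroup E] [NormedSpace ℝ E] [CompleteSpace E]
    {f f' : ℝ → E} {a b m q : ℝ} (hab : a < b) (hf : ContinuousOn f (Icc a b))
    (hf' : ∀ x ∈ Ioo a b, HasDerivAt f (f' x) x) (hq : 1 ≤ q) (hm : m ≠ 0)
    (hmc : ∀ t ∈ Ioo (0 : ℝ) 1, ‖f' (t * a + m * (1 - t) * (b / m))‖ ^ q ≤
      t * ‖f' a‖ ^ q + m * (1 - t) * ‖f' (b / m)‖ ^ q) :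
    ‖f ((a + b) / 2) - (1 / (b - a)) • ∫ x in a..b, f x‖ ≤
      (b - a) * (2 ^ (1 - 1 / q) / 8) * (‖f' a‖ ^ q + m * ‖f' (b / m)‖ ^ q) ^ (1 / q) :=
  norm_midpoint_sub_average_le_of_rpow_add_rpow_reflect_le hab hf hf' hq fun _ hx ↦
    add_reflect_le_of_mconvex_endpoints (φ := fun x ↦ ‖f' x‖ ^ q) hm hmc hx

/-- Remark 2.5: midpoint inequality for `|f'|^q` `m`-convex on `[0,∞)`, `q ∈ [1,∞)`. -/
theorem stmt_12 (f : ℝ → ℝ) (I : Set ℝ) (hIopen : IsOpen I) (hIconn : I.OrdConnected)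
    (hIci : Set.Ici (0:ℝ) ⊆ I) (hf : ∀ y ∈ I, DifferentiableAt ℝ f y)
    (a b : ℝ) (ha : 0 ≤ a) (hab : a < b)
    (hint : IntervalIntegrable (deriv f) volume a b)
    (q : ℝ) (hq : 1 ≤ q)
    (m : ℝ) (hm0 : 0 < m) (hm1 : m ≤ 1)
    (hmc : ∀ u ∈ Set.Ici (0:ℝ), ∀ v ∈ Set.Ici (0:ℝ), ∀ t ∈ Set.Icc (0:ℝ) 1,
      |deriv f (t * u + m * (1 - t) * v)| ^ q ≤
        t * |deriv f u| ^ q + m * (1 - t) * |deriv f v| ^ q) :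
    |f ((a + b) / 2) - (1 / (b - a)) * ∫ u in a..b, f u| ≤
      (b - a) * ((3 : ℝ) ^ (1 - 1 / q) / 8) *
        (|deriv f a| + m ^ (1 / q) * |deriv f (b / m)|) := by
  have : 0 ≤ b - a := sub_nonneg.2 hab.le
  refine (stmt_12_general hab
    (fun x hx ↦ (hf x (hIci (ha.trans hx.1))).continuousAt.continuousWithinAt)
    (fun x hx ↦ (hf x (hIci (ha.trans hx.1.le))).hasDerivAt) hq hm0.ne' fun t ht ↦
      hmc a ha (b / m) (div_nonneg (ha.trans hab.le) hm0.le) t (Ioo_subset_Icc_self ht)).trans ?_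
  gcongr ?_ * (?_ ^ _ / _) * ?_
  · exact sub_nonneg.2 (div_le_one_of_le₀ hq (by linarith))
  · norm_num
  · exact rpow_add_mul_rpow_rpow_one_div_le hq hm0.le (abs_nonneg _) (abs_nonneg _)
end

section
/- Let f : ℝ → ℝ be differentiable on an open interval I containing [0,∞), let 0 ≤ a < b, suppose f' is integrable on [a,b], let p > 1 and q = p/(p-1), and suppose |f'|^q is convex on [a,b]. Let a = x₀ < x₁ < ... < x_{n-1} < x_n = b be a division of [a,b] and let M(f,d) = Σ_{i=0}^{n-1} (x_{i+1} - x_i)·f((x_i + x_{i+1})/2) be the composite midpoint rule. Then |∫_a^b f(x) dx - M(f,d)| ≤ (1/4)·Σ_{i=0}^{n-1} (x_{i+1} - x_i)²·( μ₁ᵢ^{1/q} + μ₂ᵢ^{1/q} ), where μ₁ᵢ = ( |f'((x_i+x_{i+1})/2)|^q + |f'(x_i)|^q )/2 and μ₂ᵢ = ( |f'((x_i+x_{i+1})/2)|^q + |f'(x_{i+1})|^q )/2. -/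
open MeasureTheory Set intervalIntegral

/-!
On one half `[c, m]` of a panel every value of `f` differs from `f m` by at most `∫ ‖f'‖`, so
replacing `f` by `f m` costs at most `(m - c) * ∫ ‖f'‖`. By Jensen's inequality the mean of `‖f'‖`
is at most the `q`-th root of the mean of `‖f'‖ ^ q`, and by the Hermite–Hadamard inequality the
latter mean is at most the mean of the two endpoint values. Both halves have length half that of the
panel, which gives the factor `1 / 4`.
-/

section Convex

variable {g : ℝ → ℝ} {a b : ℝ}

lemma add_reflection_le_of_convexOn_Icc (hg : ConvexOn ℝ (Icc a b) g) {x : ℝ}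
    (hx : x ∈ Icc a b) : g x + g (a + b - x) ≤ g a + g b := by
  have hab : a ≤ b := hx.1.trans hx.2
  obtain ⟨s, t, hs, ht, hst, rfl⟩ := (Convex.mem_Icc hab).1 hx
  have reflection_eq : a + b - (s * a + t * b) = t * a + s * b := by
    linear_combination (-a - b) * hst
  have at_point := hg.2 (left_mem_Icc.2 hab) (right_mem_Icc.2 hab) hs ht hst
  have at_reflection :=
    hg.2 (left_mem_Icc.2 hab) (right_mem_Icc.2 hab) ht hs ((add_comm t s).trans hst)
  simp only [smul_eq_mul] at at_point at_reflection
  rw [reflection_eq]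
  linear_combination at_point + at_reflection + (g a + g b) * hst

lemma two_mul_midpoint_le_add_reflection_of_convexOn_Icc (hg : ConvexOn ℝ (Icc a b) g) {x : ℝ}
    (hx : x ∈ Icc a b) : 2 * g ((a + b) / 2) ≤ g x + g (a + b - x) := by
  have hx' : a + b - x ∈ Icc a b := ⟨by linarith [hx.2], by linarith [hx.1]⟩
  have h := hg.2 hx hx' one_half_pos.le one_half_pos.le (add_halves 1)
  have midpoint_eq : (1 / 2 : ℝ) • x + (1 / 2 : ℝ) • (a + b - x) = (a + b) / 2 := by
    simp only [smul_eq_mul]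
    ring
  rw [midpoint_eq] at h
  simp only [smul_eq_mul] at h
  linarith

lemma integrableOn_Icc_of_convexOn (hg : ConvexOn ℝ (Icc a b) g) :
    IntegrableOn g (Icc a b) := by
  have continuousOn_Ioo : ContinuousOn g (Ioo a b) := by
    simpa only [interior_Icc] using hg.continuousOn_interior
  have le_max : ∀ x ∈ Icc a b, g x ≤ max (g a) (g b) := fun x hx =>
    have hab : a ≤ b := hx.1.trans hx.2
    hg.le_max_of_mem_Icc (left_mem_Icc.2 hab) (right_mem_Icc.2 hab) hx
  have norm_le : ∀ x ∈ Icc a b, ‖g x‖ ≤ |max (g a) (g b)| + 2 * |g ((a + b) / 2)| := by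
    intro x hx
    have hx' : a + b - x ∈ Icc a b := ⟨by linarith [hx.2], by linarith [hx.1]⟩
    have two_mul_le := two_mul_midpoint_le_add_reflection_of_convexOn_Icc hg hx
    rw [Real.norm_eq_abs, abs_le]
    constructor <;>
      linarith [le_max x hx, le_max _ hx', le_abs_self (max (g a) (g b)),
        neg_abs_le (g ((a + b) / 2)), abs_nonneg (g ((a + b) / 2))]
  rw [integrableOn_Icc_iff_integrableOn_Ioo]
  exact IntegrableOn.of_bound measure_Ioo_lt_top
    (continuousOn_Ioo.aestronglyMeasurable measurableSet_Ioo) _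
    (ae_restrict_of_forall_mem measurableSet_Ioo fun x hx => norm_le x (Ioo_subset_Icc_self hx))

-- Hermite–Hadamard: average `g` with its reflection about the midpoint.
lemma integral_le_of_convexOn_Icc (hab : a ≤ b) (hg : ConvexOn ℝ (Icc a b) g) :
    ∫ x in a..b, g x ≤ (b - a) * ((g a + g b) / 2) := by
  have hgi : IntervalIntegrable g volume a b :=
    (intervalIntegrable_iff_integrableOn_Icc_of_le hab).2 (integrableOn_Icc_of_convexOn hg)
  have hgi' : IntervalIntegrable (fun x => g (a + b - x)) volume a b := by
    simpa using (hgi.comp_sub_left (a + b)).symm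
  have integral_reflection : ∫ x in a..b, g (a + b - x) = ∫ x in a..b, g x := by
    simp [integral_comp_sub_left]
  have two_mul_integral_le : 2 * ∫ x in a..b, g x ≤ (b - a) * (g a + g b) :=
    calc 2 * ∫ x in a..b, g x = ∫ x in a..b, (g x + g (a + b - x)) := by
          rw [integral_add hgi hgi', integral_reflection, two_mul]
      _ ≤ ∫ _ in a..b, (g a + g b) :=
          integral_mono_on hab (hgi.add hgi') intervalIntegrable_const
            fun x hx => add_reflection_le_of_convexOn_Icc hg hx
      _ = (b - a) * (g a + g b) := by rw [intervalIntegral.integral_const, smul_eq_mul]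
  linarith

end Convex

section PowerMean

variable {α E : Type*} [MeasurableSpace α] {μ : Measure α} [IsFiniteMeasure μ]
  [NormedAddCommGroup E] {h : α → E} {q : ℝ}

lemma integrable_of_integrable_norm_rpow (hq : 1 ≤ q) (hm : AEStronglyMeasurable h μ)
    (hi : Integrable (fun x => ‖h x‖ ^ q) μ) : Integrable h μ := by
  have hq0 : 0 < q := one_pos.trans_le hq
  have memLp : MemLp h (ENNReal.ofReal q) μ := by
    rw [← integrable_norm_rpow_iff hm (ENNReal.ofReal_pos.2 hq0).ne' ENNReal.ofReal_ne_top,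
      ENNReal.toReal_ofReal hq0.le]
    exact hi
  exact memLp.integrable (ENNReal.one_le_ofReal.2 hq)

lemma average_norm_le_rpow_average_norm_rpow [NeZero μ] (hq : 1 ≤ q)
    (hm : AEStronglyMeasurable h μ) (hi : Integrable (fun x => ‖h x‖ ^ q) μ) :
    ⨍ x, ‖h x‖ ∂μ ≤ (⨍ x, ‖h x‖ ^ q ∂μ) ^ (1 / q) := by
  have hq0 : 0 < q := one_pos.trans_le hq
  have jensen : (⨍ x, ‖h x‖ ∂μ) ^ q ≤ ⨍ x, ‖h x‖ ^ q ∂μ :=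
    (convexOn_rpow hq).map_average_le (continuousOn_id.rpow_const fun _ _ => .inr hq0.le)
      isClosed_Ici (ae_of_all _ fun _ => norm_nonneg _)
      (integrable_of_integrable_norm_rpow hq hm hi).norm hi
  have average_nonneg : 0 ≤ ⨍ x, ‖h x‖ ∂μ := integral_nonneg fun _ => norm_nonneg _
  rw [one_div]
  exact (Real.le_rpow_inv_iff_of_pos average_nonneg
    ((Real.rpow_nonneg average_nonneg q).trans jensen) hq0).2 jensen

end PowerMean

lemma integral_norm_le_of_convexOn_norm_rpow {E : Type*} [NormedAddCommGroup E] {h : ℝ → E}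
    {c d q : ℝ} (hcd : c ≤ d) (hq : 1 ≤ q)
    (hm : AEStronglyMeasurable h (volume.restrict (Ioc c d)))
    (hconv : ConvexOn ℝ (Icc c d) (fun u => ‖h u‖ ^ q)) :
    ∫ u in c..d, ‖h u‖ ≤ (d - c) * ((‖h c‖ ^ q + ‖h d‖ ^ q) / 2) ^ (1 / q) := by
  rcases hcd.eq_or_lt with rfl | hlt
  · simp
  have hpos : 0 < d - c := sub_pos.2 hlt
  have : NeZero (volume.restrict (Ioc c d)) := ⟨by simpa using hlt⟩
  have power_mean : ⨍ u in c..d, ‖h u‖ ≤ (⨍ u in c..d, ‖h u‖ ^ q) ^ (1 / q) := by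
    rw [uIoc_of_le hcd]
    exact average_norm_le_rpow_average_norm_rpow hq hm
      ((integrableOn_Icc_of_convexOn hconv).mono_set Ioc_subset_Icc_self)
  have average_nonneg : 0 ≤ ⨍ u in c..d, ‖h u‖ ^ q :=
    integral_nonneg fun _ => Real.rpow_nonneg (norm_nonneg _) q
  have hermite_hadamard : ⨍ u in c..d, ‖h u‖ ^ q ≤ (‖h c‖ ^ q + ‖h d‖ ^ q) / 2 := by
    rw [interval_average_eq_div, div_le_iff₀' hpos]
    exact integral_le_of_convexOn_Icc hcd hconv
  calc ∫ u in c..d, ‖h u‖ = (d - c) * ⨍ u in c..d, ‖h u‖ := by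
        rw [interval_average_eq_div, mul_div_cancel₀ _ hpos.ne']
    _ ≤ (d - c) * (⨍ u in c..d, ‖h u‖ ^ q) ^ (1 / q) := by gcongr
    _ ≤ (d - c) * ((‖h c‖ ^ q + ‖h d‖ ^ q) / 2) ^ (1 / q) := by gcongr

section Quadrature

variable {E : Type*} [NormedAddCommGroup E] [NormedSpace ℝ E]

lemma Icc_succ_subset_Icc_of_forall_le_succ {α : Type*} [Preorder α] {x : ℕ → α} {n : ℕ}
    (hx : ∀ i < n, x i ≤ x (i + 1)) {i : ℕ} (hi : i < n) :
    Icc (x i) (x (i + 1)) ⊆ Icc (x 0) (x n) := by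
  have hmono : MonotoneOn x (Iic n) :=
    monotoneOn_of_le_add_one ordConnected_Iic fun j _ _ hj => hx j hj
  exact Icc_subset_Icc (hmono n.zero_le hi.le i.zero_le) (hmono hi self_mem_Iic hi)

lemma norm_integral_sub_sum_le_sum {f : ℝ → E} {x : ℕ → ℝ} {n : ℕ} {R : ℕ → E} {ε : ℕ → ℝ}
    (hfi : ∀ i < n, IntervalIntegrable f volume (x i) (x (i + 1)))
    (hR : ∀ i < n, ‖(∫ u in x i..x (i + 1), f u) - R i‖ ≤ ε i) :
    ‖(∫ u in x 0..x n, f u) - ∑ i ∈ Finset.range n, R i‖ ≤ ∑ i ∈ Finset.range n, ε i := by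
  rw [← sum_integral_adjacent_intervals hfi, ← Finset.sum_sub_distrib]
  exact norm_sum_le_of_le _ fun i hi => hR i (Finset.mem_range.1 hi)

variable [CompleteSpace E] {f f' : ℝ → E} {c d q : ℝ}

lemma aestronglyMeasurable_of_hasDerivWithinAt_Icc
    (hf : ∀ u ∈ Icc c d, HasDerivWithinAt f (f' u) (Icc c d) u) :
    AEStronglyMeasurable f' (volume.restrict (Ioc c d)) := by
  rw [← restrict_Ioo_eq_restrict_Ioc]
  refine (aestronglyMeasurable_deriv f _).congr ?_
  exact ae_restrict_of_forall_mem measurableSet_Ioo fun u hu =>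
    ((hf u (Ioo_subset_Icc_self hu)).hasDerivAt (Icc_mem_nhds hu.1 hu.2)).deriv

lemma norm_sub_le_integral_norm_of_hasDerivWithinAt
    (hf : ∀ u ∈ Icc c d, HasDerivWithinAt f (f' u) (Icc c d) u)
    (hint : IntervalIntegrable f' volume c d) {u v : ℝ} (hu : u ∈ Icc c d) (hv : v ∈ Icc c d) :
    ‖f v - f u‖ ≤ ∫ t in c..d, ‖f' t‖ := by
  wlog huv : u ≤ v generalizing u v
  · rw [norm_sub_rev]
    exact this hv hu (le_of_not_ge huv)
  have hcd : c ≤ d := hu.1.trans hu.2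
  have hsub : Icc u v ⊆ Icc c d := Icc_subset_Icc hu.1 hv.2
  have fundamental_theorem : ∫ t in u..v, f' t = f v - f u := by
    refine integral_eq_sub_of_hasDerivAt_of_le huv
      (fun t ht => (hf t (hsub ht)).continuousWithinAt.mono hsub) (fun t ht => ?_)
      (hint.mono_set ?_)
    · exact (hf t (hsub (Ioo_subset_Icc_self ht))).hasDerivAt
        (Icc_mem_nhds (hu.1.trans_lt ht.1) (ht.2.trans_le hv.2))
    · rwa [uIcc_of_le huv, uIcc_of_le hcd]
  calc ‖f v - f u‖ ≤ ∫ t in u..v, ‖f' t‖ := by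
        rw [← fundamental_theorem]
        exact norm_integral_le_integral_norm huv
    _ ≤ ∫ t in c..d, ‖f' t‖ :=
        integral_mono_interval hu.1 huv hv.2 (ae_of_all _ fun _ => norm_nonneg _) hint.norm

lemma norm_integral_sub_smul_le_mul_integral_norm
    (hf : ∀ u ∈ Icc c d, HasDerivWithinAt f (f' u) (Icc c d) u)
    (hint : IntervalIntegrable f' volume c d) {w : ℝ} (hw : w ∈ Icc c d) :
    ‖(∫ u in c..d, f u) - (d - c) • f w‖ ≤ (d - c) * ∫ u in c..d, ‖f' u‖ := by
  have hcd : c ≤ d := hw.1.trans hw.2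
  have hfi : IntervalIntegrable f volume c d :=
    ContinuousOn.intervalIntegrable_of_Icc hcd fun u hu => (hf u hu).continuousWithinAt
  calc ‖(∫ u in c..d, f u) - (d - c) • f w‖ = ‖∫ u in c..d, (f u - f w)‖ := by
        rw [integral_sub hfi intervalIntegrable_const, intervalIntegral.integral_const]
    _ ≤ (∫ u in c..d, ‖f' u‖) * |d - c| := by
        refine norm_integral_le_of_norm_le_const fun u hu => ?_
        rw [uIoc_of_le hcd] at hu
        exact norm_sub_le_integral_norm_of_hasDerivWithinAt hf hint hw (Ioc_subset_Icc_self hu)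
    _ = (d - c) * ∫ u in c..d, ‖f' u‖ := by
        rw [abs_of_nonneg (sub_nonneg.2 hcd), mul_comm]

lemma norm_integral_sub_smul_le_of_convexOn_norm_rpow (hq : 1 ≤ q)
    (hf : ∀ u ∈ Icc c d, HasDerivWithinAt f (f' u) (Icc c d) u)
    (hconv : ConvexOn ℝ (Icc c d) (fun u => ‖f' u‖ ^ q)) {w : ℝ} (hw : w ∈ Icc c d) :
    ‖(∫ u in c..d, f u) - (d - c) • f w‖ ≤
      (d - c) ^ 2 * ((‖f' c‖ ^ q + ‖f' d‖ ^ q) / 2) ^ (1 / q) := by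
  have hcd : c ≤ d := hw.1.trans hw.2
  have hm := aestronglyMeasurable_of_hasDerivWithinAt_Icc hf
  have hint : IntervalIntegrable f' volume c d :=
    (intervalIntegrable_iff_integrableOn_Ioc_of_le hcd).2 <|
      integrable_of_integrable_norm_rpow hq hm
        ((integrableOn_Icc_of_convexOn hconv).mono_set Ioc_subset_Icc_self)
  calc ‖(∫ u in c..d, f u) - (d - c) • f w‖ ≤ (d - c) * ∫ u in c..d, ‖f' u‖ :=
        norm_integral_sub_smul_le_mul_integral_norm hf hint hw
    _ ≤ (d - c) * ((d - c) * ((‖f' c‖ ^ q + ‖f' d‖ ^ q) / 2) ^ (1 / q)) :=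
        mul_le_mul_of_nonneg_left (integral_norm_le_of_convexOn_norm_rpow hcd hq hm hconv)
          (sub_nonneg.2 hcd)
    _ = (d - c) ^ 2 * ((‖f' c‖ ^ q + ‖f' d‖ ^ q) / 2) ^ (1 / q) := by ring

lemma norm_integral_sub_smul_midpoint_le_of_convexOn_norm_rpow (hcd : c ≤ d) (hq : 1 ≤ q)
    (hf : ∀ u ∈ Icc c d, HasDerivWithinAt f (f' u) (Icc c d) u)
    (hconv : ConvexOn ℝ (Icc c d) (fun u => ‖f' u‖ ^ q)) :
    ‖(∫ u in c..d, f u) - (d - c) • f ((c + d) / 2)‖ ≤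
      1 / 4 * ((d - c) ^ 2 * (((‖f' ((c + d) / 2)‖ ^ q + ‖f' c‖ ^ q) / 2) ^ (1 / q)
        + ((‖f' ((c + d) / 2)‖ ^ q + ‖f' d‖ ^ q) / 2) ^ (1 / q))) := by
  set m := (c + d) / 2 with hm
  have hcm : c ≤ m := by linarith
  have hmd : m ≤ d := by linarith
  have left_sub : Icc c m ⊆ Icc c d := Icc_subset_Icc_right hmd
  have right_sub : Icc m d ⊆ Icc c d := Icc_subset_Icc_left hcm
  have hfc : ContinuousOn f (Icc c d) := fun u hu => (hf u hu).continuousWithinAt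
  have left_error := norm_integral_sub_smul_le_of_convexOn_norm_rpow hq
    (fun u hu => (hf u (left_sub hu)).mono left_sub)
    (hconv.subset left_sub (convex_Icc _ _)) (right_mem_Icc.2 hcm)
  have right_error := norm_integral_sub_smul_le_of_convexOn_norm_rpow hq
    (fun u hu => (hf u (right_sub hu)).mono right_sub)
    (hconv.subset right_sub (convex_Icc _ _)) (left_mem_Icc.2 hmd)
  have error_split : (∫ u in c..d, f u) - (d - c) • f m =
      ((∫ u in c..m, f u) - (m - c) • f m) + ((∫ u in m..d, f u) - (d - m) • f m) := by
    rw [← integral_add_adjacent_intervals ((hfc.mono left_sub).intervalIntegrable_of_Icc hcm)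
      ((hfc.mono right_sub).intervalIntegrable_of_Icc hmd)]
    module
  have left_length : m - c = (d - c) / 2 := by rw [hm]; ring
  have right_length : d - m = (d - c) / 2 := by rw [hm]; ring
  rw [error_split]
  refine (norm_add_le_of_le left_error right_error).trans_eq ?_
  rw [left_length, right_length, add_comm (‖f' c‖ ^ q)]
  ring

theorem stmt_15_general (hq : 1 ≤ q) {x : ℕ → ℝ} {n : ℕ} (hx : ∀ i < n, x i ≤ x (i + 1))
    (hf : ∀ u ∈ Icc (x 0) (x n), HasDerivWithinAt f (f' u) (Icc (x 0) (x n)) u)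
    (hconv : ConvexOn ℝ (Icc (x 0) (x n)) (fun u => ‖f' u‖ ^ q)) :
    ‖(∫ u in x 0..x n, f u) -
        ∑ i ∈ Finset.range n, (x (i + 1) - x i) • f ((x i + x (i + 1)) / 2)‖ ≤
      (1 / 4) * ∑ i ∈ Finset.range n, (x (i + 1) - x i) ^ 2 *
        (((‖f' ((x i + x (i + 1)) / 2)‖ ^ q + ‖f' (x i)‖ ^ q) / 2) ^ (1 / q)
          + ((‖f' ((x i + x (i + 1)) / 2)‖ ^ q + ‖f' (x (i + 1))‖ ^ q) / 2) ^ (1 / q)) := by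
  have panel_sub (i : ℕ) (hi : i < n) : Icc (x i) (x (i + 1)) ⊆ Icc (x 0) (x n) :=
    Icc_succ_subset_Icc_of_forall_le_succ hx hi
  have hfc : ContinuousOn f (Icc (x 0) (x n)) := fun u hu => (hf u hu).continuousWithinAt
  rw [Finset.mul_sum]
  refine norm_integral_sub_sum_le_sum
    (fun i hi => (hfc.mono (panel_sub i hi)).intervalIntegrable_of_Icc (hx i hi)) fun i hi => ?_
  exact norm_integral_sub_smul_midpoint_le_of_convexOn_norm_rpow (hx i hi) hq
    (fun u hu => (hf u (panel_sub i hi hu)).mono (panel_sub i hi))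
    (hconv.subset (panel_sub i hi) (convex_Icc _ _))

end Quadrature

/-- Proposition 4.1: error estimate for the composite midpoint rule, `|f'|^q` convex
(`1`-convex) on `[a,b]`, `q = p/(p-1)`. -/
theorem stmt_15 (f : ℝ → ℝ) (I : Set ℝ) (hIopen : IsOpen I) (hIconn : I.OrdConnected)
    (hIci : Set.Ici (0:ℝ) ⊆ I) (hf : ∀ y ∈ I, DifferentiableAt ℝ f y)
    (a b : ℝ) (ha : 0 ≤ a) (hab : a < b)
    (hint : IntervalIntegrable (deriv f) volume a b)
    (p q : ℝ) (hp : 1 < p) (hq : q = p / (p - 1))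
    (hconv : ConvexOn ℝ (Set.Icc a b) (fun u => |deriv f u| ^ q))
    (n : ℕ) (hn : 0 < n) (x : ℕ → ℝ) (hx0 : x 0 = a) (hxn : x n = b)
    (hxmono : ∀ i < n, x i < x (i + 1)) :
    |(∫ u in a..b, f u) -
        ∑ i ∈ Finset.range n, (x (i + 1) - x i) * f ((x i + x (i + 1)) / 2)| ≤
      (1 / 4) * ∑ i ∈ Finset.range n, (x (i + 1) - x i) ^ 2 *
        (((|deriv f ((x i + x (i + 1)) / 2)| ^ q + |deriv f (x i)| ^ q) / 2) ^ (1 / q)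
          + ((|deriv f ((x i + x (i + 1)) / 2)| ^ q + |deriv f (x (i + 1))| ^ q) / 2)
              ^ (1 / q)) := by
  subst hx0 hxn
  have hq1 : 1 ≤ q := by
    rw [hq, one_le_div (sub_pos.2 hp)]
    linarith
  exact stmt_15_general hq1 (fun i hi => (hxmono i hi).le)
    (fun u hu => (hf u (hIci (ha.trans hu.1))).hasDerivAt.hasDerivWithinAt) hconv
end

section
/- Let f : ℝ → ℝ be differentiable on an open interval I containing [0,∞), let 0 ≤ a < b, suppose f' is integrable on [a,b], let q ∈ [1,∞), and suppose |f'|^q is convex on [a,b]. Let a = x₀ < x₁ < ... < x_{n-1} < x_n = b be a division of [a,b] and let M(f,d) = Σ_{i=0}^{n-1} (x_{i+1} - x_i)·f((x_i + x_{i+1})/2) be the composite midpoint rule. Then |∫_a^b f(x) dx - M(f,d)| ≤ (3^{1-1/q}/8)·Σ_{i=0}^{n-1} (x_{i+1} - x_i)²·( |f'(x_i)| + |f'(x_{i+1})| ). -/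
open MeasureTheory Set intervalIntegral

/-!
On a panel `[m - r, m + r]` the midpoint error is the integral over `s ∈ [0, r]` of the symmetric
second difference `f (m + s) + f (m - s) - 2 f m`. Its derivative in `s` is at most
`‖f' (m + s)‖ + ‖f' (m - s)‖`. The values of a convex function at two points placed symmetrically
in an interval sum to at most the sum of its values at the endpoints; applied to
`‖f'‖ ^ q`, and combined with the power mean inequality, this bounds the derivative by
`C = 2 ^ (1 - 1 / q) * (‖f' (m - r)‖ + ‖f' (m + r)‖)`. So the error on the panel is at most
`∫ s in 0..r, C * s = C * r ^ 2 / 2`, and the panels add up.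
-/

lemma convexOn_add_reflect_le {V : Type*} [AddCommGroup V] [Module ℝ V] {S : Set V} {g : V → ℝ}
    (hg : ConvexOn ℝ S g) {c d u : V} (hc : c ∈ S) (hd : d ∈ S) (hu : u ∈ segment ℝ c d) :
    g u + g (c + d - u) ≤ g c + g d := by
  obtain ⟨α, β, hα, hβ, hαβ, rfl⟩ := hu
  have h_reflect : c + d - (α • c + β • d) = β • c + α • d := by
    rw [← eq_sub_iff_add_eq] at hαβ
    subst hαβ
    module
  have h_point := hg.2 hc hd hα hβ hαβ
  have h_reflected := hg.2 hc hd hβ hα (by linarith)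
  rw [h_reflect]
  simp only [smul_eq_mul] at h_point h_reflected
  linear_combination h_point + h_reflected + (g c + g d) * hαβ

lemma add_le_two_rpow_mul_add_of_rpow_add_rpow_le {u v A B q : ℝ} (hu : 0 ≤ u) (hv : 0 ≤ v)
    (hA : 0 ≤ A) (hB : 0 ≤ B) (hq : 1 ≤ q) (h : u ^ q + v ^ q ≤ A ^ q + B ^ q) :
    u + v ≤ 2 ^ (1 - 1 / q) * (A + B) := by
  have hq_pos : 0 < q := by linarith
  have h_mean : (u + v) ^ q ≤ 2 ^ (q - 1) * (u ^ q + v ^ q) := by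
    lift u to NNReal using hu
    lift v to NNReal using hv
    exact_mod_cast NNReal.rpow_add_le_mul_rpow_add_rpow u v hq
  refine (Real.rpow_le_rpow_iff (by positivity) (by positivity) hq_pos).1 ?_
  calc (u + v) ^ q ≤ 2 ^ (q - 1) * (u ^ q + v ^ q) := h_mean
    _ ≤ 2 ^ (q - 1) * (A + B) ^ q := by
        gcongr
        exact h.trans (Real.add_rpow_le_rpow_add hA hB hq)
    _ = (2 ^ (1 - 1 / q) * (A + B)) ^ q := by
        rw [Real.mul_rpow (by positivity) (by positivity), ← Real.rpow_mul zero_le_two,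
          sub_mul, one_div_mul_cancel hq_pos.ne', one_mul]

section Midpoint

variable {E : Type*} [NormedAddCommGroup E]

lemma norm_add_norm_reflect_le_of_convexOn_norm_rpow {f' : ℝ → E} {c d q u : ℝ} (hq : 1 ≤ q)
    (hconv : ConvexOn ℝ (Icc c d) fun y => ‖f' y‖ ^ q) (hu : u ∈ Icc c d) :
    ‖f' u‖ + ‖f' (c + d - u)‖ ≤ 2 ^ (1 - 1 / q) * (‖f' c‖ + ‖f' d‖) := by
  have hcd : c ≤ d := hu.1.trans hu.2
  refine add_le_two_rpow_mul_add_of_rpow_add_rpow_le (norm_nonneg _) (norm_nonneg _)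
    (norm_nonneg _) (norm_nonneg _) hq ?_
  exact convexOn_add_reflect_le hconv (left_mem_Icc.2 hcd) (right_mem_Icc.2 hcd)
    (segment_eq_Icc hcd ▸ hu)

variable [NormedSpace ℝ E] {f f' : ℝ → E}

lemma norm_symmetric_second_difference_le {m r C s : ℝ}
    (hf : ∀ y ∈ Icc (m - r) (m + r), HasDerivWithinAt f (f' y) (Icc (m - r) (m + r)) y)
    (hbound : ∀ t ∈ Icc 0 r, ‖f' (m + t) - f' (m - t)‖ ≤ C) (hs : s ∈ Icc 0 r) :
    ‖f (m + s) + f (m - s) - (2 : ℝ) • f m‖ ≤ C * s := by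
  have h_right : MapsTo (fun t => m + t) (Icc 0 r) (Icc (m - r) (m + r)) := fun t ht =>
    ⟨by linarith [ht.1, ht.2], by linarith [ht.2]⟩
  have h_left : MapsTo (fun t => m - t) (Icc 0 r) (Icc (m - r) (m + r)) := fun t ht =>
    ⟨by linarith [ht.2], by linarith [ht.1, ht.2]⟩
  have h_deriv : ∀ t ∈ Icc 0 r, HasDerivWithinAt (fun t => f (m + t) + f (m - t))
      (f' (m + t) - f' (m - t)) (Icc 0 r) t := fun t ht => by
    have h_right_deriv := (hf _ (h_right ht)).scomp t
      ((hasDerivWithinAt_id t _).const_add m) h_right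
    have h_left_deriv := (hf _ (h_left ht)).scomp t
      ((hasDerivWithinAt_id t _).const_sub m) h_left
    exact (h_right_deriv.add h_left_deriv).congr_deriv (by module)
  have h_mean_value := (convex_Icc 0 r).norm_image_sub_le_of_norm_hasDerivWithin_le h_deriv hbound
    (left_mem_Icc.2 (hs.1.trans hs.2)) hs
  simpa only [add_zero, sub_zero, ← two_smul ℝ (f m), Real.norm_of_nonneg hs.1] using h_mean_value

variable [CompleteSpace E]

lemma integral_sub_midpoint_eq_integral_symmetric_second_difference {m r : ℝ}
    (hf : IntervalIntegrable f volume (m - r) (m + r)) :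
    (∫ u in (m - r)..(m + r), f u) - (2 * r) • f m =
      ∫ s in (0 : ℝ)..r, (f (m + s) + f (m - s) - (2 : ℝ) • f m) := by
  have hm : m ∈ uIcc (m - r) (m + r) := by
    rcases le_total 0 r with hr | hr
    · exact mem_uIcc_of_le (by linarith) (by linarith)
    · exact mem_uIcc_of_ge (by linarith) (by linarith)
  have h_left : IntervalIntegrable f volume (m - r) m :=
    hf.mono_set (uIcc_subset_uIcc left_mem_uIcc hm)
  have h_right : IntervalIntegrable f volume m (m + r) :=
    hf.mono_set (uIcc_subset_uIcc hm right_mem_uIcc)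
  have h_left_shift : IntervalIntegrable (fun s => f (m - s)) volume 0 r := by
    simpa using (h_left.comp_sub_left m).symm
  have h_right_shift : IntervalIntegrable (fun s => f (m + s)) volume 0 r := by
    simpa using h_right.comp_add_left m
  rw [integral_sub (h_right_shift.add h_left_shift) intervalIntegrable_const,
    integral_add h_right_shift h_left_shift, integral_comp_add_left, integral_comp_sub_left,
    intervalIntegral.integral_const, ← integral_add_adjacent_intervals h_left h_right]
  simp only [add_zero, sub_zero]
  module

lemma norm_integral_sub_midpoint_le {m r C : ℝ} (hr : 0 ≤ r)
    (hf : ∀ y ∈ Icc (m - r) (m + r), HasDerivWithinAt f (f' y) (Icc (m - r) (m + r)) y)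
    (hbound : ∀ t ∈ Icc 0 r, ‖f' (m + t) - f' (m - t)‖ ≤ C) :
    ‖(∫ u in (m - r)..(m + r), f u) - (2 * r) • f m‖ ≤ C * r ^ 2 / 2 := by
  have hf_cont : ContinuousOn f (Icc (m - r) (m + r)) := fun y hy => (hf y hy).continuousWithinAt
  rw [integral_sub_midpoint_eq_integral_symmetric_second_difference
    (hf_cont.intervalIntegrable_of_Icc (by linarith))]
  calc ‖∫ s in (0 : ℝ)..r, (f (m + s) + f (m - s) - (2 : ℝ) • f m)‖
      ≤ ∫ s in (0 : ℝ)..r, C * s :=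
        norm_integral_le_of_norm_le hr
          (.of_forall fun s hs =>
            norm_symmetric_second_difference_le hf hbound (Ioc_subset_Icc_self hs))
          (Continuous.intervalIntegrable (by fun_prop) _ _)
    _ = C * r ^ 2 / 2 := by
        rw [intervalIntegral.integral_const_mul, integral_id]
        ring

lemma norm_integral_sub_midpoint_le_of_convexOn_norm_rpow {c d q : ℝ} (hcd : c ≤ d) (hq : 1 ≤ q)
    (hf : ∀ y ∈ Icc c d, HasDerivWithinAt f (f' y) (Icc c d) y)
    (hconv : ConvexOn ℝ (Icc c d) fun y => ‖f' y‖ ^ q) :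
    ‖(∫ u in c..d, f u) - (d - c) • f ((c + d) / 2)‖ ≤
      2 ^ (1 - 1 / q) / 8 * ((d - c) ^ 2 * (‖f' c‖ + ‖f' d‖)) := by
  obtain ⟨m, r, rfl, rfl⟩ : ∃ m r, c = m - r ∧ d = m + r :=
    ⟨(c + d) / 2, (d - c) / 2, by ring, by ring⟩
  have h_bound : ∀ t ∈ Icc 0 r, ‖f' (m + t) - f' (m - t)‖ ≤
      2 ^ (1 - 1 / q) * (‖f' (m - r)‖ + ‖f' (m + r)‖) := fun t ht => by
    have h_pair := norm_add_norm_reflect_le_of_convexOn_norm_rpow hq hconv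
      (u := m + t) ⟨by linarith [ht.1, ht.2], by linarith [ht.2]⟩
    rw [show m - r + (m + r) - (m + t) = m - t by ring] at h_pair
    exact (norm_sub_le _ _).trans h_pair
  have h_error := norm_integral_sub_midpoint_le (by linarith) hf h_bound
  rw [show m + r - (m - r) = 2 * r by ring, show (m - r + (m + r)) / 2 = m by ring]
  exact h_error.trans_eq (by ring)

theorem stmt_16_general {q : ℝ} (hq : 1 ≤ q) {n : ℕ} {x : ℕ → ℝ} (hx : MonotoneOn x (Iic n))
    (hf : ∀ y ∈ Icc (x 0) (x n), HasDerivWithinAt f (f' y) (Icc (x 0) (x n)) y)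
    (hconv : ConvexOn ℝ (Icc (x 0) (x n)) fun y => ‖f' y‖ ^ q) :
    ‖(∫ u in (x 0)..(x n), f u) -
        ∑ i ∈ Finset.range n, (x (i + 1) - x i) • f ((x i + x (i + 1)) / 2)‖ ≤
      2 ^ (1 - 1 / q) / 8 * ∑ i ∈ Finset.range n, (x (i + 1) - x i) ^ 2 *
        (‖f' (x i)‖ + ‖f' (x (i + 1))‖) := by
  have h_step : ∀ i < n, x i ≤ x (i + 1) := fun i hi => hx hi.le hi i.le_succ
  have h_panel : ∀ i < n, Icc (x i) (x (i + 1)) ⊆ Icc (x 0) (x n) := fun i hi =>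
    Icc_subset_Icc (hx n.zero_le hi.le i.zero_le) (hx hi self_mem_Iic hi)
  have hf_cont : ContinuousOn f (Icc (x 0) (x n)) := fun y hy => (hf y hy).continuousWithinAt
  rw [← sum_integral_adjacent_intervals fun i hi =>
      (hf_cont.mono (h_panel i hi)).intervalIntegrable_of_Icc (h_step i hi),
    ← Finset.sum_sub_distrib, Finset.mul_sum]
  refine norm_sum_le_of_le _ fun i hi => ?_
  rw [Finset.mem_range] at hi
  exact norm_integral_sub_midpoint_le_of_convexOn_norm_rpow (h_step i hi) hq
    (fun y hy => (hf y (h_panel i hi hy)).mono (h_panel i hi))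
    (hconv.subset (h_panel i hi) (convex_Icc _ _))

end Midpoint

/-- Proposition 4.2: error estimate for the composite midpoint rule, `|f'|^q` convex
(`1`-convex) on `[a,b]`, `q ∈ [1,∞)`. -/
theorem stmt_16 (f : ℝ → ℝ) (I : Set ℝ) (hIopen : IsOpen I) (hIconn : I.OrdConnected)
    (hIci : Set.Ici (0:ℝ) ⊆ I) (hf : ∀ y ∈ I, DifferentiableAt ℝ f y)
    (a b : ℝ) (ha : 0 ≤ a) (hab : a < b)
    (hint : IntervalIntegrable (deriv f) volume a b)
    (q : ℝ) (hq : 1 ≤ q)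
    (hconv : ConvexOn ℝ (Set.Icc a b) (fun u => |deriv f u| ^ q))
    (n : ℕ) (hn : 0 < n) (x : ℕ → ℝ) (hx0 : x 0 = a) (hxn : x n = b)
    (hxmono : ∀ i < n, x i < x (i + 1)) :
    |(∫ u in a..b, f u) -
        ∑ i ∈ Finset.range n, (x (i + 1) - x i) * f ((x i + x (i + 1)) / 2)| ≤
      ((3 : ℝ) ^ (1 - 1 / q) / 8) * ∑ i ∈ Finset.range n, (x (i + 1) - x i) ^ 2 *
        (|deriv f (x i)| + |deriv f (x (i + 1))|) := by
  subst hx0 hxn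
  have hx : MonotoneOn x (Iic n) :=
    monotoneOn_of_le_add_one ordConnected_Iic fun i _ _ hi => (hxmono i hi).le
  have h_exponent : 0 ≤ 1 - 1 / q := sub_nonneg.2 (div_le_one_of_le₀ hq (by linarith))
  refine (stmt_16_general hq hx (fun y hy =>
    (hf y (hIci (ha.trans hy.1))).hasDerivAt.hasDerivWithinAt) hconv).trans ?_
  simp only [Real.norm_eq_abs]
  gcongr
  norm_num
end
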